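/- Let n ≥ 1, let b ≥ 1 be an integer, and let α ∈ (1/2, 1] satisfy 2α < n and nb > 2α(b+1). Let p(·) ∈ P^log(ℝ^n) with p⁻ > b+1 and 2α·p⁺ < n(b+1). Then there exists C > 0 such that for every measurable 𝓕 : (0,∞)×ℝ^n → ℝ: N_{p(·), nb/(2α)}( (t,x) ↦ ∫_0^t (𝔤_{t−s}^α ∗ 𝓕(s,·))(x) ds ) ≤ C · N_{p(·)/(b+1), nb/((b+1)·2α)}(𝓕). -/

import Mathlib

open MeasureTheory Set
open scoped ENNReal FourierTransform

noncomputable section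

/-- Euclidean space `ℝ^n`. -/
abbrev Rn (n : ℕ) := EuclideanSpace ℝ (Fin n)

/-- Luxemburg norm of an `ℝ≥0∞`-valued function for a variable exponent `p`. -/
def luxNorm {Ω : Type*} [MeasurableSpace Ω] (μ : Measure Ω) (p : Ω → ℝ) (f : Ω → ℝ≥0∞) : ℝ≥0∞ :=
  sInf {lam : ℝ≥0∞ | 0 < lam ∧ ∫⁻ x, (f x / lam) ^ (p x) ∂μ ≤ 1}

/-- Luxemburg norm `‖f‖_{L^{p(·)}}` of a real-valued function. -/
def luxNormR {Ω : Type*} [MeasurableSpace Ω] (μ : Measure Ω) (p : Ω → ℝ) (f : Ω → ℝ) : ℝ≥0∞ :=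
  luxNorm μ p (fun x => ENNReal.ofReal |f x|)

/-- `p(·) ∈ P^log(Ω)`: measurable, with values in `[1,∞)` on `Ω`, locally log-Hölder
continuous on `Ω`, and satisfying the log-Hölder decay condition on `Ω`. -/
def IsPLog {E : Type*} [NormedAddCommGroup E] [MeasurableSpace E] (Ω : Set E) (p : E → ℝ) : Prop :=
  Measurable p ∧ (∀ x ∈ Ω, 1 ≤ p x) ∧
  ∃ C₁ > (0:ℝ), ∃ C₂ > (0:ℝ), ∃ pinf : ℝ,
    (∀ x ∈ Ω, ∀ y ∈ Ω, x ≠ y →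
      |1 / p x - 1 / p y| ≤ C₁ / Real.log (Real.exp 1 + 1 / ‖x - y‖)) ∧
    (∀ x ∈ Ω, |1 / p x - 1 / pinf| ≤ C₂ / Real.log (Real.exp 1 + ‖x‖))

/-- The fractional heat kernel `𝔤_t^α` on `ℝ^n`: the inverse Fourier transform of
`ξ ↦ exp (-t‖ξ‖^{2α})` (it is real-valued; we take the real part). -/
def gKer (n : ℕ) (α t : ℝ) (x : Rn n) : ℝ :=
  (𝓕⁻ (fun ξ : Rn n => (Real.exp (-t * ‖ξ‖ ^ (2 * α)) : ℂ)) x).re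

/-- Convolution on `ℝ^n`. -/
def conv (n : ℕ) (g f : Rn n → ℝ) (x : Rn n) : ℝ := ∫ y, g (x - y) * f y

/-- `x ↦ ess sup_{t>0} |u(t,x)|`, as an `ℝ≥0∞`-valued function. -/
def timeSup (n : ℕ) (u : ℝ → Rn n → ℝ) (x : Rn n) : ℝ≥0∞ :=
  essSup (fun t => ENNReal.ofReal |u t x|) (volume.restrict (Ioi (0:ℝ)))

/-- Mixed norm `‖f‖_{𝓛^{p(·)}_r} = max {‖f‖_{L^{p(·)}}, ‖f‖_{L^r}}`. -/
def mixedNorm (n : ℕ) (p : Rn n → ℝ) (r : ℝ) (f : Rn n → ℝ) : ℝ≥0∞ :=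
  max (luxNormR volume p f) (luxNormR volume (fun _ => r) f)

/-- `N_{p(·),r}(u) = ‖x ↦ ess sup_{t>0}|u(t,x)|‖_{𝓛^{p(·)}_r}`. -/
def mixedN (n : ℕ) (p : Rn n → ℝ) (r : ℝ) (u : ℝ → Rn n → ℝ) : ℝ≥0∞ :=
  max (luxNorm volume p (timeSup n u)) (luxNorm volume (fun _ => r) (timeSup n u))

/-!
Subordination writes `exp (-t‖ξ‖^{2α})` as a mixture of Gaussians, which gives the kernel bound
`|𝔤_t^α(x)| ≤ K min (t^{-n/(2α)}, |x|^{-n})`. Integrating it over all times `t > 0` bounds the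
Duhamel term, uniformly in `t`, by the Riesz potential of order `2α` of
`f := ess sup_t |𝓕(t, ·)|`. With `r := nb/((b+1)2α)` and `‖f‖_{L^r} ≤ 1`, Hedberg's inequality
bounds this potential pointwise by a constant times `(M f)^{1 - 2αr/n} = (M f)^{1/(b+1)}`, so that
the `L^{p(·)}` and `L^{(b+1)r}` estimates of the Duhamel term become the boundedness of the
maximal operator `M` on `L^{p(·)/(b+1)}` and on `L^r`. The former holds because `p⁻ > b + 1` and
`p` is log-Hölder continuous; the proof is the classical one, by a pointwise Jensen inequality for
averages over balls whose error term is an integrable weight. A maximal operator over dyadic radii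
suffices throughout, which avoids all measurability issues.
-/

section MomentFunction

/-- `φ` is, on `(0, ∞)`, the Mellin-type moment function `r ↦ ∫ z ^ r ∂μ` of a sub-probability
measure on `[0, 1]`. Up to the substitution `z = exp (-s)` these are the completely monotone
functions bounded by `1`; the point `z = 0`, i.e. `s = ∞`, makes the space of measures compact. -/
def IsMomentFunction (φ : ℝ → ℝ) : Prop :=
  ∃ μ : Measure unitInterval, μ univ ≤ 1 ∧ ∀ r > 0, φ r = ∫ z, (z : ℝ) ^ r ∂μ

lemma continuous_unitInterval_rpow {r : ℝ} (hr : 0 < r) :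
    Continuous fun z : unitInterval => (z : ℝ) ^ r :=
  continuous_subtype_val.rpow_const fun _ => Or.inr hr.le

lemma integrable_unitInterval_rpow (μ : Measure unitInterval) [IsFiniteMeasure μ] {r : ℝ}
    (hr : 0 < r) : Integrable (fun z : unitInterval => (z : ℝ) ^ r) μ :=
  (continuous_unitInterval_rpow hr).integrable_of_hasCompactSupport
    (HasCompactSupport.of_compactSpace _)

namespace IsMomentFunction

lemma exp_neg_mul {s : ℝ} (hs : 0 ≤ s) : IsMomentFunction fun r => Real.exp (-(s * r)) := by
  let z : unitInterval := ⟨Real.exp (-s), (Real.exp_pos _).le, Real.exp_le_one_iff.2 (by linarith)⟩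
  refine ⟨Measure.dirac z, by simp, fun r _ => ?_⟩
  rw [integral_dirac, ← Real.exp_mul, neg_mul]

lemma mul {φ ψ : ℝ → ℝ} (hφ : IsMomentFunction φ) (hψ : IsMomentFunction ψ) :
    IsMomentFunction fun r => φ r * ψ r := by
  obtain ⟨μ, hμ, hφμ⟩ := hφ
  obtain ⟨ν, hν, hψν⟩ := hψ
  have : IsFiniteMeasure μ := ⟨hμ.trans_lt ENNReal.one_lt_top⟩
  have : IsFiniteMeasure ν := ⟨hν.trans_lt ENNReal.one_lt_top⟩
  have hmeas : Measurable fun z : unitInterval × unitInterval => z.1 * z.2 := by fun_prop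
  refine ⟨(μ.prod ν).map fun z => z.1 * z.2, ?_, fun r hr => ?_⟩
  · rw [Measure.map_apply hmeas MeasurableSet.univ, preimage_univ, ← univ_prod_univ,
      Measure.prod_prod]
    exact mul_le_one' hμ hν
  · rw [integral_map hmeas.aemeasurable (continuous_unitInterval_rpow hr).aestronglyMeasurable]
    simp only [hφμ r hr, hψν r hr, ← integral_prod_mul]
    simp only [Set.Icc.coe_mul, Real.mul_rpow (unitInterval.nonneg _) (unitInterval.nonneg _)]

lemma pow {φ : ℝ → ℝ} (hφ : IsMomentFunction φ) (k : ℕ) : IsMomentFunction fun r => φ r ^ k := by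
  induction k with
  | zero => simpa using exp_neg_mul le_rfl
  | succ k ih => simpa only [pow_succ] using ih.mul hφ

lemma of_hasSum {φ : ℕ → ℝ → ℝ} (hφ : ∀ k, IsMomentFunction (φ k)) {a : ℕ → ℝ}
    (ha : ∀ k, 0 ≤ a k) (ha1 : ∑' k, ENNReal.ofReal (a k) ≤ 1) {f : ℝ → ℝ}
    (hf : ∀ r > 0, HasSum (fun k => a k * φ k r) (f r)) : IsMomentFunction f := by
  choose μ hμ hφμ using hφ
  let ν : Measure unitInterval := Measure.sum fun k => ENNReal.ofReal (a k) • μ k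
  have hν : ν univ ≤ 1 := by
    rw [Measure.sum_apply _ MeasurableSet.univ]
    calc ∑' k, (ENNReal.ofReal (a k) • μ k) univ ≤ ∑' k, ENNReal.ofReal (a k) :=
          ENNReal.tsum_le_tsum fun k => mul_le_of_le_one_right' (hμ k)
      _ ≤ 1 := ha1
  have : IsFiniteMeasure ν := ⟨hν.trans_lt ENNReal.one_lt_top⟩
  refine ⟨ν, hν, fun r hr => (hf r hr).unique ?_⟩
  simpa only [integral_smul_measure, ENNReal.toReal_ofReal (ha _), hφμ _ r hr, smul_eq_mul]
    using hasSum_integral_measure (integrable_unitInterval_rpow ν hr)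

lemma of_tendsto {φ : ℕ → ℝ → ℝ} (hφ : ∀ m, IsMomentFunction (φ m)) {f : ℝ → ℝ}
    (hf : ∀ r > 0, Filter.Tendsto (fun m => φ m r) Filter.atTop (nhds (f r))) :
    IsMomentFunction f := by
  choose μ hμ hφμ using hφ
  let ν (m : ℕ) : FiniteMeasure unitInterval := ⟨μ m, ⟨(hμ m).trans_lt ENNReal.one_lt_top⟩⟩
  let l : Ultrafilter ℕ := Ultrafilter.of Filter.atTop
  have hl : (l : Filter ℕ) ≤ Filter.atTop := Ultrafilter.of_le _
  have hν (m : ℕ) : (ν m).mass ≤ 1 := ENNReal.toNNReal_mono ENNReal.one_ne_top (hμ m)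
  obtain ⟨ρ, hρ, hlim⟩ :=
    (isCompact_setOfPred_finiteMeasure_le_of_compactSpace unitInterval 1).ultrafilter_le_nhds
      (l.map ν) (Filter.tendsto_principal.2 (Filter.Eventually.of_forall hν))
  refine ⟨ρ, ?_, fun r hr => tendsto_nhds_unique ((hf r hr).mono_left hl) ?_⟩
  · rw [← FiniteMeasure.ennreal_mass]
    exact_mod_cast hρ
  · simp only [hφμ _ r hr]
    exact FiniteMeasure.tendsto_iff_forall_integral_tendsto.1 hlim
      (BoundedContinuousFunction.mkOfCompact ⟨_, continuous_unitInterval_rpow hr⟩)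

lemma exp_neg_mul_one_sub {φ : ℝ → ℝ} (hφ : IsMomentFunction φ) {t : ℝ} (ht : 0 ≤ t) :
    IsMomentFunction fun r => Real.exp (-(t * (1 - φ r))) := by
  have hexp (u : ℝ) :
      HasSum (fun k : ℕ => Real.exp (-t) * (t ^ k / k.factorial) * u ^ k)
        (Real.exp (-(t * (1 - u)))) := by
    have h := (NormedSpace.expSeries_div_hasSum_exp (t * u)).mul_left (Real.exp (-t))
    rw [← Real.exp_eq_exp_ℝ, ← Real.exp_add, show -t + t * u = -(t * (1 - u)) by ring] at h
    exact h.congr_fun fun k => by rw [mul_pow]; ring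
  have hnonneg (k : ℕ) : 0 ≤ Real.exp (-t) * (t ^ k / k.factorial) := by positivity
  refine of_hasSum hφ.pow hnonneg ?_ fun r _ => hexp (φ r)
  have hone : HasSum (fun k : ℕ => Real.exp (-t) * (t ^ k / k.factorial)) 1 := by
    simpa using hexp 1
  rw [← ENNReal.ofReal_tsum_of_nonneg hnonneg hone.summable, hone.tsum_eq, ENNReal.ofReal_one]

end IsMomentFunction

lemma multichoose_neg_succ_nonpos {α : ℝ} (hα : 0 ≤ α) (hα1 : α ≤ 1) (k : ℕ) :
    Ring.multichoose (-α) (k + 1) ≤ 0 := by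
  have hasc : (ascPochhammer ℝ (k + 1)).eval (-α) ≤ 0 := by
    induction k with
    | zero => simpa using hα
    | succ k ih =>
      rw [ascPochhammer_succ_eval]
      refine mul_nonpos_of_nonpos_of_nonneg ih ?_
      push_cast
      linarith [Nat.cast_nonneg (α := ℝ) k]
  have h := Ring.factorial_nsmul_multichoose_eq_ascPochhammer (-α) (k + 1)
  rw [Polynomial.ascPochhammer_smeval_eq_eval, nsmul_eq_mul] at h
  exact nonpos_of_mul_nonpos_right (h.trans_le hasc) (by positivity)

lemma hasSum_multichoose_neg (α : ℝ) {u : ℝ} (hu : |u| < 1) :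
    HasSum (fun k => Ring.multichoose (-α) k * u ^ k) ((1 - u) ^ α) := by
  have hmem : u ∈ Metric.eball (0 : ℝ) 1 := by
    simpa [Metric.mem_eball, edist_dist] using hu
  have hpos : 0 < 1 - u := by linarith [(abs_lt.1 hu).2]
  simpa [Ring.multichoose_eq, mul_comm, Real.rpow_neg hpos.le] using
    (Real.one_div_one_sub_rpow_hasFPowerSeriesOnBall_zero (-α)).hasSum hmem

lemma hasSum_neg_multichoose_neg_succ (α : ℝ) {u : ℝ} (hu : |u| < 1) :
    HasSum (fun k => -Ring.multichoose (-α) (k + 1) * u ^ (k + 1)) (1 - (1 - u) ^ α) := by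
  have h := (hasSum_nat_add_iff' 1).2 (hasSum_multichoose_neg α hu)
  simpa using h.neg

lemma sum_neg_multichoose_neg_succ_le_one {α : ℝ} (hα : 0 ≤ α) (hα1 : α ≤ 1) (N : ℕ) :
    ∑ k ∈ Finset.range N, -Ring.multichoose (-α) (k + 1) ≤ 1 := by
  have hcont : Continuous fun u : ℝ =>
      ∑ k ∈ Finset.range N, -Ring.multichoose (-α) (k + 1) * u ^ (k + 1) := by fun_prop
  have hlim := (hcont.tendsto 1).mono_left (nhdsWithin_le_nhds (s := Iio 1))
  simp only [one_pow, mul_one] at hlim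
  refine le_of_tendsto hlim ?_
  filter_upwards [Ioo_mem_nhdsLT one_pos] with u hu
  have hsum := hasSum_neg_multichoose_neg_succ α (abs_lt.2 ⟨by linarith [hu.1], hu.2⟩)
  refine (sum_le_hasSum _ (fun k _ => mul_nonneg ?_ (pow_nonneg hu.1.le _)) hsum).trans ?_
  · exact neg_nonneg.2 (multichoose_neg_succ_nonpos hα hα1 k)
  · linarith [Real.rpow_nonneg (sub_nonneg.2 hu.2.le) α]

namespace IsMomentFunction

lemma one_sub_one_sub_rpow {φ : ℝ → ℝ} (hφ : IsMomentFunction φ) (hφ1 : ∀ r > 0, |φ r| < 1)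
    {α : ℝ} (hα : 0 ≤ α) (hα1 : α ≤ 1) : IsMomentFunction fun r => 1 - (1 - φ r) ^ α := by
  have hnonneg (k : ℕ) : 0 ≤ -Ring.multichoose (-α) (k + 1) :=
    neg_nonneg.2 (multichoose_neg_succ_nonpos hα hα1 k)
  refine of_hasSum (fun k => hφ.pow (k + 1)) hnonneg ?_ fun r hr =>
    hasSum_neg_multichoose_neg_succ α (hφ1 r hr)
  refine ENNReal.tsum_le_of_sum_range_le fun N => ?_
  rw [← ENNReal.ofReal_sum_of_nonneg fun k _ => hnonneg k, ENNReal.ofReal_le_one]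
  exact sum_neg_multichoose_neg_succ_le_one hα hα1 N

lemma exp_neg_mul_rpow {α : ℝ} (hα : 0 ≤ α) (hα1 : α ≤ 1) {t : ℝ} (ht : 0 ≤ t) :
    IsMomentFunction fun r => Real.exp (-(t * r ^ α)) := by
  let φ (m : ℕ) (r : ℝ) : ℝ := Real.exp (-(((m : ℝ) + 1)⁻¹ * r))
  have hφ (m : ℕ) : IsMomentFunction (φ m) := exp_neg_mul (by positivity)
  have hφ1 (m : ℕ) (r : ℝ) (hr : 0 < r) : |φ m r| < 1 := by
    rw [Real.abs_exp, Real.exp_lt_one_iff, neg_lt_zero]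
    positivity
  refine of_tendsto (fun m => ((hφ m).one_sub_one_sub_rpow (hφ1 m) hα hα1).exp_neg_mul_one_sub
    (t := t * ((m : ℝ) + 1) ^ α) (by positivity)) fun r hr => ?_
  have hlim : Filter.Tendsto (fun m : ℕ => ((m : ℝ) + 1) * (1 - φ m r)) Filter.atTop
      (nhds r) := by
    have hderiv : HasDerivAt (fun x : ℝ => -Real.exp (-(x * r))) r 0 :=
      ((hasDerivAt_id' (0 : ℝ)).mul_const r).neg.exp.neg.congr_deriv (by simp)
    have hinv : Filter.Tendsto (fun m : ℕ => ((m : ℝ) + 1)⁻¹) Filter.atTop (nhdsWithin 0 (Ioi 0)) :=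
      tendsto_inv_atTop_nhdsGT_zero.comp
        (Filter.tendsto_atTop_add_const_right _ 1 tendsto_natCast_atTop_atTop)
    refine (hderiv.tendsto_slope_zero_right.comp hinv).congr fun m => ?_
    simp [φ, sub_eq_neg_add, add_comm]
  have h := (((Real.continuous_rpow_const hα).tendsto r |>.comp hlim).const_mul t).neg.rexp
  refine h.congr fun m => ?_
  have hφle : 0 ≤ 1 - φ m r := sub_nonneg.2 (abs_lt.1 (hφ1 m r hr)).2.le
  simp only [Function.comp_apply, Real.mul_rpow (by positivity : (0 : ℝ) ≤ m + 1) hφle,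
    sub_sub_cancel, mul_assoc]

end IsMomentFunction

end MomentFunction

section HeatKernel

open Module

variable {V : Type*} [NormedAddCommGroup V] [InnerProductSpace ℝ V] [FiniteDimensional ℝ V]
  [MeasurableSpace V] [BorelSpace V]

/-- The cosine transform of a real function `σ`, normalized like Mathlib's `𝓕⁻`: it is the real
part of the inverse Fourier transform of `σ`. -/
def cosTransform (σ : V → ℝ) (x : V) : ℝ :=
  ∫ ξ, σ ξ * Real.cos (2 * Real.pi * inner ℝ ξ x)

lemma re_fourierInv_ofReal {σ : V → ℝ} (hσ : Integrable σ) (x : V) :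
    (𝓕⁻ (fun ξ => (σ ξ : ℂ)) x).re = cosTransform σ x := by
  have hint : Integrable fun ξ : V =>
      Complex.exp (↑(2 * Real.pi * inner ℝ ξ x) * Complex.I) • (σ ξ : ℂ) := by
    refine hσ.ofReal.bdd_mul (c := 1) (by fun_prop) (.of_forall fun ξ => ?_)
    rw [Complex.norm_exp_ofReal_mul_I]
  have hre := Complex.reCLM.integral_comp_comm hint
  simp only [Complex.reCLM_apply] at hre
  rw [Real.fourierInv_eq', cosTransform, ← hre]
  congr with ξ
  rw [smul_eq_mul, mul_comm, Complex.re_ofReal_mul, Complex.exp_ofReal_mul_I_re]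

lemma abs_cosTransform_le {σ : V → ℝ} (hσ : Integrable σ) (x : V) :
    |cosTransform σ x| ≤ ∫ ξ, |σ ξ| := by
  refine norm_integral_le_of_norm_le (f := fun ξ => σ ξ * _) hσ.abs (.of_forall fun ξ => ?_)
  rw [norm_mul]
  exact mul_le_of_le_one_right (norm_nonneg _) (Real.abs_cos_le_one _)

lemma integrable_exp_neg_mul_norm_rpow [Nontrivial V] {b q : ℝ} (hb : 0 < b) (hq : 0 < q) :
    Integrable fun ξ : V => Real.exp (-b * ‖ξ‖ ^ q) := by
  rw [integrable_fun_norm_addHaar volume (f := fun y => Real.exp (-b * y ^ q))]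
  simpa using integrableOn_rpow_mul_exp_neg_mul_rpow (s := ((finrank ℝ V - 1 : ℕ) : ℝ))
    (neg_one_lt_zero.trans_le (Nat.cast_nonneg _)) hq hb

lemma integral_exp_neg_mul_norm_rpow {t q : ℝ} (ht : 0 < t) (hq : 0 < q) :
    ∫ ξ : V, Real.exp (-t * ‖ξ‖ ^ q) =
      t ^ (-(finrank ℝ V / q)) * ∫ ξ : V, Real.exp (-‖ξ‖ ^ q) := by
  have hpow : (t ^ q⁻¹) ^ q = t := Real.rpow_inv_rpow ht.le hq.ne'
  have hscale := Measure.integral_comp_smul volume (fun ξ : V => Real.exp (-‖ξ‖ ^ q)) (t ^ q⁻¹)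
  have hfactor : |((t ^ q⁻¹) ^ finrank ℝ V)⁻¹| = t ^ (-(finrank ℝ V / q)) := by
    rw [abs_of_nonneg (by positivity), ← Real.rpow_natCast, ← Real.rpow_mul ht.le,
      ← Real.rpow_neg ht.le, inv_mul_eq_div]
  simpa only [norm_smul, Real.norm_of_nonneg (Real.rpow_nonneg ht.le _),
    Real.mul_rpow (Real.rpow_nonneg ht.le _) (norm_nonneg _), hpow, hfactor, smul_eq_mul,
    ← neg_mul] using hscale

lemma cosTransform_gaussian [Nontrivial V] {b : ℝ} (hb : 0 < b) (x : V) :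
    cosTransform (fun ξ => Real.exp (-b * ‖ξ‖ ^ 2)) x
      = (Real.pi / b) ^ (finrank ℝ V / 2 : ℝ) * Real.exp (-(Real.pi ^ 2 * ‖x‖ ^ 2 / b)) := by
  have hint : Integrable fun ξ : V => Real.exp (-b * ‖ξ‖ ^ 2) := by
    simpa using integrable_exp_neg_mul_norm_rpow (V := V) hb two_pos
  have h := fourier_gaussian_innerProductSpace (b := (b : ℂ)) (V := V) (by simpa using hb) (-x)
  rw [norm_neg] at h
  rw [← re_fourierInv_ofReal hint, Real.fourierInv_eq_fourier_neg]
  push_cast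
  rw [h, ← Complex.ofReal_re (_ * _)]
  push_cast
  rw [Complex.ofReal_cpow (by positivity)]
  push_cast
  congr 4
  ring

lemma rpow_half_mul_exp_neg_le_factorial (d : ℕ) {u : ℝ} (hu : 0 ≤ u) :
    u ^ (d / 2 : ℝ) * Real.exp (-u) ≤ d.factorial := by
  rw [Real.exp_neg, ← div_eq_mul_inv, div_le_iff₀ (Real.exp_pos u)]
  rcases le_total u 1 with h | h
  · calc u ^ (d / 2 : ℝ) ≤ 1 := Real.rpow_le_one hu h (by positivity)
      _ ≤ d.factorial * Real.exp u :=
        one_le_mul_of_one_le_of_one_le (by exact_mod_cast d.factorial_pos) (Real.one_le_exp hu)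
  · calc u ^ (d / 2 : ℝ) ≤ u ^ (d : ℝ) :=
          Real.rpow_le_rpow_of_exponent_le h (half_le_self d.cast_nonneg)
      _ = u ^ d := Real.rpow_natCast u d
      _ ≤ d.factorial * Real.exp u :=
        (div_le_iff₀' (by positivity)).1 (Real.pow_div_factorial_le_exp u hu d)

lemma cosTransform_gaussian_mul_norm_pow_le [Nontrivial V] {b : ℝ} (hb : 0 < b) (x : V) :
    |cosTransform (fun ξ => Real.exp (-b * ‖ξ‖ ^ 2)) x| * ‖x‖ ^ finrank ℝ V
      ≤ (finrank ℝ V).factorial := by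
  set d := finrank ℝ V
  have hpi : (1 : ℝ) ≤ Real.pi ^ (d / 2 : ℝ) :=
    Real.one_le_rpow (by linarith [Real.pi_gt_three]) (by positivity)
  have hnorm : (‖x‖ ^ 2) ^ (d / 2 : ℝ) = ‖x‖ ^ d := by
    rw [← Real.rpow_natCast_mul (norm_nonneg x), Nat.cast_ofNat, mul_div_cancel₀ _ two_ne_zero,
      Real.rpow_natCast]
  set u := Real.pi ^ 2 * ‖x‖ ^ 2 / b with hu
  have hupow : u ^ (d / 2 : ℝ) = (Real.pi / b) ^ (d / 2 : ℝ) * Real.pi ^ (d / 2 : ℝ) * ‖x‖ ^ d := by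
    rw [← hnorm, ← Real.mul_rpow (by positivity) (by positivity),
      ← Real.mul_rpow (by positivity) (by positivity), hu]
    congr 1
    ring
  rw [cosTransform_gaussian hb, abs_of_nonneg (by positivity)]
  calc (Real.pi / b) ^ (d / 2 : ℝ) * Real.exp (-u) * ‖x‖ ^ d
      ≤ (Real.pi / b) ^ (d / 2 : ℝ) * Real.exp (-u) * ‖x‖ ^ d * Real.pi ^ (d / 2 : ℝ) :=
        le_mul_of_one_le_right (by positivity) hpi
    _ = u ^ (d / 2 : ℝ) * Real.exp (-u) := by rw [hupow]; ring
    _ ≤ d.factorial := rpow_half_mul_exp_neg_le_factorial d (by positivity)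

lemma ae_norm_sq_pos [Nontrivial V] : ∀ᵐ ξ : V, 0 < ‖ξ‖ ^ 2 := by
  filter_upwards [Measure.ae_ne volume (0 : V)] with ξ hξ
  positivity

namespace IsMomentFunction

lemma integrable_prod_rpow_norm_sq [Nontrivial V] {φ : ℝ → ℝ}
    {μ : Measure unitInterval} [IsFiniteMeasure μ] (hφμ : ∀ r > 0, φ r = ∫ z, (z : ℝ) ^ r ∂μ)
    (hφ : Integrable fun ξ : V => φ (‖ξ‖ ^ 2)) :
    Integrable (fun p : V × unitInterval => (p.2 : ℝ) ^ (‖p.1‖ ^ 2)) (volume.prod μ) := by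
  have hmeas : Measurable fun p : V × unitInterval => (p.2 : ℝ) ^ (‖p.1‖ ^ 2) := by fun_prop
  refine (integrable_prod_iff hmeas.aestronglyMeasurable).2 ⟨?_, hφ.congr ?_⟩
  · filter_upwards [ae_norm_sq_pos] with ξ hξ using integrable_unitInterval_rpow μ hξ
  · filter_upwards [ae_norm_sq_pos] with ξ hξ
    rw [hφμ _ hξ]
    congr with z
    exact (Real.norm_of_nonneg (Real.rpow_nonneg z.2.1 _)).symm

lemma abs_cosTransform_rpow_mul_norm_pow_le [Nontrivial V] (z : unitInterval)
    (hz : Integrable fun ξ : V => (z : ℝ) ^ (‖ξ‖ ^ 2)) (x : V) :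
    |cosTransform (fun ξ => (z : ℝ) ^ (‖ξ‖ ^ 2)) x| * ‖x‖ ^ finrank ℝ V
      ≤ (finrank ℝ V).factorial := by
  rcases z.2.1.eq_or_lt with hz0 | hz0
  · have hzero : cosTransform (fun ξ : V => (z : ℝ) ^ (‖ξ‖ ^ 2)) x = 0 := by
      refine integral_eq_zero_of_ae ?_
      filter_upwards [ae_norm_sq_pos] with ξ hξ
      rw [← hz0, Real.zero_rpow hξ.ne', zero_mul, Pi.zero_apply]
    rw [hzero, abs_zero, zero_mul]
    positivity
  have hz1 : (z : ℝ) < 1 := by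
    refine z.2.2.lt_of_ne fun hz1 => ?_
    have : NoncompactSpace V := NormedSpace.noncompactSpace ℝ V
    simp only [hz1, Real.one_rpow, integrable_const_iff, one_ne_zero, false_or,
      isFiniteMeasure_iff, measure_univ_of_isAddLeftInvariant, lt_self_iff_false] at hz
  have hexp (ξ : V) : (z : ℝ) ^ (‖ξ‖ ^ 2) = Real.exp (-(-Real.log z) * ‖ξ‖ ^ 2) := by
    rw [neg_neg, Real.rpow_def_of_pos hz0]
  simpa only [hexp] using
    cosTransform_gaussian_mul_norm_pow_le (neg_pos.2 (Real.log_neg hz0 hz1)) x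

lemma abs_cosTransform_mul_norm_pow_le [Nontrivial V] {φ : ℝ → ℝ} (hφ : IsMomentFunction φ)
    (hint : Integrable fun ξ : V => φ (‖ξ‖ ^ 2)) (x : V) :
    |cosTransform (fun ξ => φ (‖ξ‖ ^ 2)) x| * ‖x‖ ^ finrank ℝ V ≤ (finrank ℝ V).factorial := by
  obtain ⟨μ, hμ, hφμ⟩ := hφ
  have : IsFiniteMeasure μ := ⟨hμ.trans_lt ENNReal.one_lt_top⟩
  have hprod := integrable_prod_rpow_norm_sq hφμ hint
  have hcos : Integrable (fun p : V × unitInterval =>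
      (p.2 : ℝ) ^ (‖p.1‖ ^ 2) * Real.cos (2 * Real.pi * inner ℝ p.1 x)) (volume.prod μ) :=
    hprod.mul_bdd (c := 1) (by fun_prop) (.of_forall fun p => Real.abs_cos_le_one _)
  have hswap : cosTransform (fun ξ => φ (‖ξ‖ ^ 2)) x
      = ∫ z : unitInterval, cosTransform (fun ξ => (z : ℝ) ^ (‖ξ‖ ^ 2)) x ∂μ := by
    rw [cosTransform, integral_congr_ae (g := fun ξ => ∫ z : unitInterval,
      (z : ℝ) ^ (‖ξ‖ ^ 2) * Real.cos (2 * Real.pi * inner ℝ ξ x) ∂μ)]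
    · exact integral_integral_swap hcos
    · filter_upwards [ae_norm_sq_pos] with ξ hξ
      rw [hφμ _ hξ, integral_mul_const]
  rw [hswap, ← abs_of_nonneg (pow_nonneg (norm_nonneg x) (finrank ℝ V)), ← abs_mul,
    ← integral_mul_const]
  have hbound : ∀ᵐ z : unitInterval ∂μ,
      ‖cosTransform (fun ξ : V => (z : ℝ) ^ (‖ξ‖ ^ 2)) x * ‖x‖ ^ finrank ℝ V‖
        ≤ (finrank ℝ V).factorial := by
    filter_upwards [hprod.prod_left_ae] with z hz
    rw [norm_mul, Real.norm_eq_abs, Real.norm_of_nonneg (by positivity)]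
    exact abs_cosTransform_rpow_mul_norm_pow_le z hz x
  refine (norm_integral_le_of_norm_le_const hbound).trans
    (mul_le_of_le_one_right (by positivity) ?_)
  exact ENNReal.toReal_mono ENNReal.one_ne_top hμ

end IsMomentFunction

lemma gKer_eq_cosTransform {n : ℕ} [Nontrivial (Rn n)] {α t : ℝ} (hα : 0 < α) (ht : 0 < t)
    (x : Rn n) :
    gKer n α t x = cosTransform (fun ξ => Real.exp (-t * ‖ξ‖ ^ (2 * α))) x :=
  re_fourierInv_ofReal (integrable_exp_neg_mul_norm_rpow ht (by positivity)) x

lemma abs_gKer_mul_norm_pow_le {n : ℕ} [Nontrivial (Rn n)] {α t : ℝ} (hα : 0 < α) (hα1 : α ≤ 1)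
    (ht : 0 < t) (x : Rn n) : |gKer n α t x| * ‖x‖ ^ n ≤ n.factorial := by
  have hsymbol (ξ : Rn n) : Real.exp (-t * ‖ξ‖ ^ (2 * α)) = Real.exp (-(t * (‖ξ‖ ^ 2) ^ α)) := by
    rw [Real.rpow_mul (norm_nonneg ξ), Real.rpow_two, neg_mul]
  have hint := integrable_exp_neg_mul_norm_rpow (V := Rn n) ht (by positivity : 0 < 2 * α)
  have hmoment := IsMomentFunction.exp_neg_mul_rpow hα.le hα1 ht.le
  simp only [hsymbol] at hint
  simpa only [gKer_eq_cosTransform hα ht, hsymbol, finrank_euclideanSpace_fin] using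
    hmoment.abs_cosTransform_mul_norm_pow_le hint x

lemma exists_abs_gKer_le_rpow {n : ℕ} [Nontrivial (Rn n)] {α : ℝ} (hα : 0 < α) :
    ∃ B, ∀ t > 0, ∀ x : Rn n, |gKer n α t x| ≤ B * t ^ (-(n / (2 * α)) : ℝ) := by
  refine ⟨∫ ξ : Rn n, Real.exp (-‖ξ‖ ^ (2 * α)), fun t ht x => ?_⟩
  have hq : 0 < 2 * α := by positivity
  have hscale := integral_exp_neg_mul_norm_rpow (V := Rn n) ht hq
  rw [finrank_euclideanSpace_fin, mul_comm (_ ^ _)] at hscale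
  rw [gKer_eq_cosTransform hα ht, ← hscale]
  simpa only [Real.abs_exp] using abs_cosTransform_le (integrable_exp_neg_mul_norm_rpow ht hq) x

lemma exists_abs_gKer_le_min {n : ℕ} [Nontrivial (Rn n)] {α : ℝ} (hα : 0 < α) (hα1 : α ≤ 1) :
    ∃ K > 0, ∀ t > 0, ∀ x : Rn n, x ≠ 0 →
      |gKer n α t x| ≤ K * min (t ^ (-(n / (2 * α)) : ℝ)) (‖x‖ ^ (-n : ℝ)) := by
  obtain ⟨B, hB⟩ := exists_abs_gKer_le_rpow (n := n) hα
  refine ⟨max B n.factorial, by positivity, fun t ht x hx => ?_⟩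
  rw [mul_min_of_nonneg _ _ (by positivity)]
  refine le_min ((hB t ht x).trans ?_) ?_
  · gcongr
    exact le_max_left _ _
  · rw [Real.rpow_neg (norm_nonneg x), Real.rpow_natCast, ← div_eq_mul_inv,
      le_div_iff₀ (by positivity)]
    exact (abs_gKer_mul_norm_pow_le hα hα1 ht x).trans (le_max_right _ _)

end HeatKernel

section Duhamel

lemma lintegral_Ioi_rpow {c S : ℝ} (hc : 0 < c) (hS : 0 < S) :
    ∫⁻ s in Ioi S, ENNReal.ofReal (s ^ (-c - 1)) = ENNReal.ofReal (S ^ (-c) / c) := by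
  rw [← ofReal_integral_eq_lintegral_ofReal (integrableOn_Ioi_rpow_of_lt (by linarith) hS),
    integral_Ioi_rpow_of_lt (by linarith) hS, sub_add_cancel, neg_div_neg_eq]
  filter_upwards [ae_restrict_mem measurableSet_Ioi] with s hs
    using Real.rpow_nonneg (hS.trans hs).le _

lemma exists_lintegral_Ioi_min_rpow_le {d β : ℝ} (hβ : 0 < β) (hβd : β < d) :
    ∃ c : ℝ≥0∞, c ≠ ∞ ∧ ∀ ρ > 0,
      ∫⁻ t in Ioi (0 : ℝ), ENNReal.ofReal (min (t ^ (-(d / β))) (ρ ^ (-d)))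
        ≤ c * ENNReal.ofReal (ρ ^ (β - d)) := by
  set c := d / β - 1 with hc
  have hc0 : 0 < c := sub_pos.2 ((one_lt_div hβ).2 hβd)
  refine ⟨1 + ENNReal.ofReal c⁻¹, by finiteness, fun ρ hρ => ?_⟩
  have hT : 0 < ρ ^ β := Real.rpow_pos_of_pos hρ β
  have hnear : ∫⁻ t in Ioc 0 (ρ ^ β), ENNReal.ofReal (min (t ^ (-(d / β))) (ρ ^ (-d)))
      ≤ ENNReal.ofReal (ρ ^ (β - d)) := by
    refine (lintegral_mono fun t => ENNReal.ofReal_le_ofReal (min_le_right _ _)).trans_eq ?_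
    rw [lintegral_const, Measure.restrict_apply_univ, Real.volume_Ioc, sub_zero,
      ← ENNReal.ofReal_mul (by positivity), ← Real.rpow_add hρ, neg_add_eq_sub]
  have hfar : ∫⁻ t in Ioi (ρ ^ β), ENNReal.ofReal (min (t ^ (-(d / β))) (ρ ^ (-d)))
      ≤ ENNReal.ofReal c⁻¹ * ENNReal.ofReal (ρ ^ (β - d)) := by
    have hexp : β * -c = β - d := by rw [hc]; field_simp; ring
    calc ∫⁻ t in Ioi (ρ ^ β), ENNReal.ofReal (min (t ^ (-(d / β))) (ρ ^ (-d)))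
        ≤ ∫⁻ t in Ioi (ρ ^ β), ENNReal.ofReal (t ^ (-c - 1)) := by
          refine lintegral_mono fun t => ENNReal.ofReal_le_ofReal ?_
          rw [hc, neg_sub', sub_neg_eq_add, add_sub_cancel_right]
          exact min_le_left _ _
      _ = ENNReal.ofReal c⁻¹ * ENNReal.ofReal (ρ ^ (β - d)) := by
          rw [lintegral_Ioi_rpow hc0 hT, ← Real.rpow_mul hρ.le, hexp, div_eq_inv_mul,
            ENNReal.ofReal_mul (by positivity)]
  rw [← Ioc_union_Ioi_eq_Ioi hT.le, add_mul, one_mul]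
  exact (lintegral_union_le _ _ _).trans (add_le_add hnear hfar)

lemma measurable_essSup_left {X Y : Type*} [MeasurableSpace X] [MeasurableSpace Y]
    {μ : Measure X} [SFinite μ] {f : X → Y → ℝ≥0∞} (hf : Measurable (Function.uncurry f)) :
    Measurable fun y => essSup (fun x => f x y) μ := by
  refine measurable_of_Ioi fun a => ?_
  have hpre : (fun y => essSup (fun x => f x y) μ) ⁻¹' Ioi a = {y | 0 < μ {x | a < f x y}} := by
    ext y
    have hle : essSup (fun x => f x y) μ ≤ a ↔ μ {x | a < f x y} = 0 := by
      simp only [← not_le]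
      rw [← ae_iff]
      exact ⟨fun h => (ENNReal.ae_le_essSup _).mono fun x hx => hx.trans h, essSup_le_of_ae_le a⟩
    rw [mem_preimage, mem_Ioi, mem_ofPred_eq, pos_iff_ne_zero, ne_eq, ← hle, not_le]
  rw [hpre]
  exact measurableSet_lt measurable_const
    (measurable_measure_prodMk_right (measurableSet_lt measurable_const hf))

lemma measurable_timeSup {n : ℕ} {F : ℝ → Rn n → ℝ} (hF : Measurable (Function.uncurry F)) :
    Measurable (timeSup n F) :=
  measurable_essSup_left (f := fun t x => ENNReal.ofReal |F t x|)
    ((by fun_prop : Measurable fun r : ℝ => ENNReal.ofReal |r|).comp hF)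

lemma enorm_conv_le {n : ℕ} {g : Rn n → ℝ} {k : Rn n → ℝ≥0∞} (hgk : ∀ z ≠ 0, ‖g z‖ₑ ≤ k z)
    [Nontrivial (Rn n)] (f : Rn n → ℝ) (x : Rn n) :
    ‖conv n g f x‖ₑ ≤ ∫⁻ y, k (x - y) * ‖f y‖ₑ := by
  refine (enorm_integral_le_lintegral_enorm _).trans (lintegral_mono_ae ?_)
  filter_upwards [Measure.ae_ne volume x] with y hy
  rw [enorm_mul]
  gcongr
  exact hgk _ (sub_ne_zero.2 hy.symm)

lemma setLIntegral_Ioo_sub_left_le (f : ℝ → ℝ≥0∞) (t : ℝ) :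
    ∫⁻ s in Ioo 0 t, f (t - s) ≤ ∫⁻ τ in Ioi 0, f τ := by
  have hpre : (fun s => t - s) ⁻¹' Ioi 0 = Iio t := by
    ext s
    simp
  calc ∫⁻ s in Ioo 0 t, f (t - s) ≤ ∫⁻ s in Iio t, f (t - s) :=
        lintegral_mono_set Ioo_subset_Iio_self
    _ = ∫⁻ τ in Ioi 0, f τ := by
        rw [← hpre]
        exact (Measure.measurePreserving_sub_left volume t).setLIntegral_comp_preimage_emb
          (MeasurableEquiv.subLeft t).measurableEmbedding _ _

/-- The inhomogeneous term `∫_0^t g_{t-s} ∗ F(s, ·) ds` of Duhamel's formula for the kernels `g`. -/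
def duhamel {n : ℕ} (g F : ℝ → Rn n → ℝ) (t : ℝ) (x : Rn n) : ℝ :=
  ∫ s in Ioc 0 t, conv n (g (t - s)) (F s) x

lemma timeSup_duhamel_le {n : ℕ} [Nontrivial (Rn n)] {g : ℝ → Rn n → ℝ} {k : ℝ → Rn n → ℝ≥0∞}
    (hk : Measurable (Function.uncurry k)) (hgk : ∀ τ > 0, ∀ z ≠ 0, ‖g τ z‖ₑ ≤ k τ z)
    {F : ℝ → Rn n → ℝ} (hF : Measurable (Function.uncurry F)) (x : Rn n) :
    timeSup n (duhamel g F) x ≤ ∫⁻ y, (∫⁻ τ in Ioi 0, k τ (x - y)) * timeSup n F y := by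
  refine essSup_le_of_ae_le _ (.of_forall fun t => ?_)
  have hk' : Measurable fun w : ℝ × Rn n => k (t - w.1) (x - w.2) :=
    hk.comp (by fun_prop : Measurable fun w : ℝ × Rn n => (t - w.1, x - w.2))
  have hF' : Measurable fun w : ℝ × Rn n => ‖F w.1 w.2‖ₑ := measurable_enorm.comp hF
  have hsup (y : Rn n) : ∀ᵐ s ∂volume.restrict (Ioo 0 t), ‖F s y‖ₑ ≤ timeSup n F y := by
    simp only [Real.enorm_eq_ofReal_abs]
    exact ae_restrict_of_ae_restrict_of_subset Ioo_subset_Ioi_self (ENNReal.ae_le_essSup _)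
  simp only [← Real.enorm_eq_ofReal_abs]
  calc ‖∫ s in Ioc 0 t, conv n (g (t - s)) (F s) x‖ₑ
      ≤ ∫⁻ s in Ioo 0 t, ‖conv n (g (t - s)) (F s) x‖ₑ := by
        rw [restrict_Ioo_eq_restrict_Ioc]
        exact enorm_integral_le_lintegral_enorm _
    _ ≤ ∫⁻ s in Ioo 0 t, ∫⁻ y, k (t - s) (x - y) * ‖F s y‖ₑ :=
        setLIntegral_mono' measurableSet_Ioo fun s hs =>
          enorm_conv_le (hgk _ (sub_pos.2 hs.2)) _ x
    _ = ∫⁻ y, ∫⁻ s in Ioo 0 t, k (t - s) (x - y) * ‖F s y‖ₑ :=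
        lintegral_lintegral_swap (hk'.mul hF').aemeasurable
    _ ≤ ∫⁻ y, (∫⁻ s in Ioo 0 t, k (t - s) (x - y)) * timeSup n F y := by
        refine lintegral_mono fun y => ?_
        have hky : Measurable fun s => k (t - s) (x - y) :=
          hk.comp (by fun_prop : Measurable fun s => (t - s, x - y))
        rw [← lintegral_mul_const _ hky]
        refine lintegral_mono_ae ((hsup y).mono fun s hs => ?_)
        gcongr
    _ ≤ ∫⁻ y, (∫⁻ τ in Ioi 0, k τ (x - y)) * timeSup n F y := by
        exact lintegral_mono fun y =>
          mul_le_mul_left (setLIntegral_Ioo_sub_left_le (fun τ => k τ (x - y)) t) _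

/-- The Riesz potential of order `β`, without the usual normalizing constant. The kernel
`‖x - y‖ ^ (β - d)` is a real power, hence `0` at `y = x` when `β ≠ d`. -/
def rieszPotential {E : Type*} [NormedAddCommGroup E] [NormedSpace ℝ E] [MeasurableSpace E]
    (μ : Measure E) (β : ℝ) (f : E → ℝ≥0∞) (x : E) : ℝ≥0∞ :=
  ∫⁻ y, ENNReal.ofReal (‖x - y‖ ^ (β - Module.finrank ℝ E)) * f y ∂μ

lemma exists_timeSup_duhamel_gKer_le {n : ℕ} [Nontrivial (Rn n)] {α : ℝ} (hα : 0 < α)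
    (hα1 : α ≤ 1) (hαn : 2 * α < n) :
    ∃ K : ℝ≥0∞, K ≠ ∞ ∧ ∀ F : ℝ → Rn n → ℝ, Measurable (Function.uncurry F) → ∀ x,
      timeSup n (duhamel (gKer n α) F) x
        ≤ K * rieszPotential volume (2 * α) (timeSup n F) x := by
  obtain ⟨K, hK, hgK⟩ := exists_abs_gKer_le_min (n := n) hα hα1
  obtain ⟨c, hc, hck⟩ := exists_lintegral_Ioi_min_rpow_le (by positivity : 0 < 2 * α) hαn
  let k (τ : ℝ) (z : Rn n) : ℝ≥0∞ :=
    ENNReal.ofReal K * ENNReal.ofReal (min (τ ^ (-(n / (2 * α)) : ℝ)) (‖z‖ ^ (-n : ℝ)))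
  have hk : Measurable (Function.uncurry k) := by
    unfold k Function.uncurry
    fun_prop
  have hgk (τ : ℝ) (hτ : τ > 0) (z : Rn n) (hz : z ≠ 0) : ‖gKer n α τ z‖ₑ ≤ k τ z := by
    rw [Real.enorm_eq_ofReal_abs]
    dsimp only [k]
    rw [← ENNReal.ofReal_mul hK.le]
    exact ENNReal.ofReal_le_ofReal (hgK τ hτ z hz)
  refine ⟨ENNReal.ofReal K * c, by finiteness, fun F hF x => ?_⟩
  refine (timeSup_duhamel_le hk hgk hF x).trans ?_
  rw [rieszPotential, ← lintegral_const_mul' _ _ (by finiteness)]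
  refine lintegral_mono_ae ?_
  filter_upwards [Measure.ae_ne volume x] with y hy
  rw [lintegral_const_mul' _ _ ENNReal.ofReal_ne_top, finrank_euclideanSpace_fin, mul_assoc,
    mul_assoc, ← mul_assoc c]
  gcongr
  exact hck _ (norm_pos_iff.2 (sub_ne_zero.2 hy.symm))

end Duhamel

section MaximalFunction

lemma lintegral_Ioc_rpow {c S : ℝ} (hc : 0 < c) (hS : 0 ≤ S) :
    ∫⁻ s in Ioc 0 S, ENNReal.ofReal (s ^ (c - 1)) = ENNReal.ofReal (S ^ c / c) := by
  have hint : IntervalIntegrable (fun s : ℝ => s ^ (c - 1)) volume 0 S :=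
    intervalIntegral.intervalIntegrable_rpow' (by linarith)
  rw [← ofReal_integral_eq_lintegral_ofReal hint.1, ← intervalIntegral.integral_of_le hS,
    integral_rpow (.inl (by linarith)), sub_add_cancel, Real.zero_rpow hc.ne', sub_zero]
  filter_upwards [ae_restrict_mem measurableSet_Ioc] with s hs using Real.rpow_nonneg hs.1.le _

lemma ennreal_rpow_eq_lintegral {s : ℝ} (hs : 0 < s) (a : ℝ≥0∞) :
    a ^ s = ENNReal.ofReal s * ∫⁻ r in Ioi (0 : ℝ) ∩ {r | ENNReal.ofReal r < a},
      ENNReal.ofReal (r ^ (s - 1)) := by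
  have hs' : ENNReal.ofReal s ≠ 0 := (ENNReal.ofReal_pos.2 hs).ne'
  rcases eq_or_ne a ∞ with rfl | ha
  · have hdiv : ∫⁻ r in Ioi (0 : ℝ), ENNReal.ofReal (r ^ (s - 1)) = ∞ := by
      by_contra hfin
      refine not_integrableOn_Ioi_rpow (s - 1)
        ((lintegral_ofReal_ne_top_iff_integrable (by fun_prop) ?_).1 hfin)
      filter_upwards [ae_restrict_mem measurableSet_Ioi] with r hr using Real.rpow_nonneg hr.le _
    simp only [ENNReal.ofReal_lt_top, ofPred_true, inter_univ]
    rw [hdiv, ENNReal.top_rpow_of_pos hs, ENNReal.mul_top hs']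
  · have hset : Ioi (0 : ℝ) ∩ {r | ENNReal.ofReal r < a} = Ioo 0 a.toReal := by
      ext r
      exact and_congr_right fun hr => ENNReal.ofReal_lt_iff_lt_toReal (le_of_lt hr) ha
    rw [hset, restrict_Ioo_eq_restrict_Ioc, lintegral_Ioc_rpow hs ENNReal.toReal_nonneg,
      ENNReal.ofReal_div_of_pos hs, ENNReal.mul_div_cancel hs' ENNReal.ofReal_ne_top,
      ← ENNReal.ofReal_rpow_of_nonneg ENNReal.toReal_nonneg hs.le, ENNReal.ofReal_toReal ha]

lemma lintegral_rpow_eq_lintegral_meas_ofReal_lt {X : Type*} [MeasurableSpace X] (μ : Measure X)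
    [SFinite μ] {f : X → ℝ≥0∞} (hf : Measurable f) {s : ℝ} (hs : 0 < s) :
    ∫⁻ x, f x ^ s ∂μ = ENNReal.ofReal s *
      ∫⁻ r in Ioi (0 : ℝ), ENNReal.ofReal (r ^ (s - 1)) * μ {x | ENNReal.ofReal r < f x} := by
  let S : Set (X × ℝ) := {z | ENNReal.ofReal z.2 < f z.1}
  have hS : MeasurableSet S := measurableSet_lt (by fun_prop) (by fun_prop)
  let g (x : X) (r : ℝ) : ℝ≥0∞ := S.indicator (fun z => ENNReal.ofReal (z.2 ^ (s - 1))) (x, r)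
  have hg : Measurable (Function.uncurry g) := Measurable.indicator (by fun_prop) hS
  calc ∫⁻ x, f x ^ s ∂μ
      = ∫⁻ x, ENNReal.ofReal s * (∫⁻ r in Ioi (0 : ℝ), g x r) ∂μ := by
        refine lintegral_congr fun x => ?_
        have hSx : MeasurableSet {r : ℝ | ENNReal.ofReal r < f x} :=
          measurableSet_lt (by fun_prop) measurable_const
        rw [ennreal_rpow_eq_lintegral hs, inter_comm, ← Measure.restrict_restrict hSx,
          ← lintegral_indicator hSx]
        rfl
    _ = ENNReal.ofReal s * ∫⁻ r in Ioi (0 : ℝ), (∫⁻ x, g x r ∂μ) := by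
        rw [lintegral_const_mul' _ _ ENNReal.ofReal_ne_top,
          lintegral_lintegral_swap hg.aemeasurable]
    _ = _ := by
        congr 1
        refine lintegral_congr fun r => ?_
        rw [← lintegral_indicator_const (measurableSet_lt measurable_const hf)]
        rfl

/- This is Doob's argument: both sides are written with the layer cake formula, the right-hand
one for the measure with density `f`. -/
lemma lintegral_rpow_le_of_mul_meas_lt_le {X : Type*} [MeasurableSpace X] {μ : Measure X}
    [SFinite μ] {f g : X → ℝ≥0∞} (hf : Measurable f) (hg : Measurable g) {A : ℝ≥0∞} (hA : A ≠ ∞)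
    (hfg : ∀ c : ℝ≥0∞, c * μ {x | c < g x} ≤ A * ∫⁻ x in {x | c < f x}, f x ∂μ)
    {s : ℝ} (hs : 1 < s) :
    ∫⁻ x, g x ^ s ∂μ ≤ ENNReal.ofReal (s / (s - 1)) * A * ∫⁻ x, f x ^ s ∂μ := by
  have hs0 : 0 < s := one_pos.trans hs
  have hs1 : 0 < s - 1 := sub_pos.2 hs
  let ν := μ.withDensity f
  have hlevel (r : ℝ) (hr : r ∈ Ioi 0) :
      ENNReal.ofReal (r ^ (s - 1)) * μ {x | ENNReal.ofReal r < g x}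
        ≤ A * (ENNReal.ofReal (r ^ (s - 1 - 1)) * ν {x | ENNReal.ofReal r < f x}) := by
    have hsplit : r ^ (s - 1) = r ^ (s - 1 - 1) * r := by
      rw [← Real.rpow_add_one (ne_of_gt hr), sub_add_cancel]
    rw [hsplit, ENNReal.ofReal_mul (Real.rpow_nonneg (le_of_lt hr) _), mul_assoc,
      mul_left_comm A, withDensity_apply _ (measurableSet_lt measurable_const hf)]
    exact mul_le_mul_right (hfg _) _
  have hfν : ∫⁻ x, f x ^ (s - 1) ∂ν = ∫⁻ x, f x ^ s ∂μ := by
    rw [lintegral_withDensity_eq_lintegral_mul _ hf (by fun_prop)]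
    refine lintegral_congr fun x => ?_
    nth_rw 1 [Pi.mul_apply, ← ENNReal.rpow_one (f x)]
    rw [← ENNReal.rpow_add_of_nonneg _ _ zero_le_one hs1.le, add_sub_cancel]
  calc ∫⁻ x, g x ^ s ∂μ
      = ENNReal.ofReal s * ∫⁻ r in Ioi (0 : ℝ),
          ENNReal.ofReal (r ^ (s - 1)) * μ {x | ENNReal.ofReal r < g x} :=
        lintegral_rpow_eq_lintegral_meas_ofReal_lt μ hg hs0
    _ ≤ ENNReal.ofReal s * ∫⁻ r in Ioi (0 : ℝ),
          A * (ENNReal.ofReal (r ^ (s - 1 - 1)) * ν {x | ENNReal.ofReal r < f x}) := by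
        gcongr ENNReal.ofReal s * ?_
        exact setLIntegral_mono' measurableSet_Ioi hlevel
    _ = ENNReal.ofReal (s / (s - 1)) * A * ∫⁻ x, f x ^ (s - 1) ∂ν := by
        rw [lintegral_const_mul' _ _ hA, lintegral_rpow_eq_lintegral_meas_ofReal_lt ν hf hs1,
          mul_right_comm, ← mul_assoc (ENNReal.ofReal (s / (s - 1))),
          ← ENNReal.ofReal_mul (by positivity), div_mul_cancel₀ _ hs1.ne', mul_right_comm,
          mul_assoc]
    _ = _ := by rw [hfν]

variable {E : Type*} [NormedAddCommGroup E] [MeasurableSpace E] {μ : Measure E}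

/-- The centred maximal function with radii restricted to powers of two; it is comparable with
the full centred maximal function, and its measurability is that of a countable supremum. -/
def dyadicMaximal (μ : Measure E) (f : E → ℝ≥0∞) (x : E) : ℝ≥0∞ :=
  ⨆ k : ℤ, ⨍⁻ y in Metric.closedBall x (2 ^ k), f y ∂μ

lemma dyadicMaximal_le_add_const {f g : E → ℝ≥0∞} {c : ℝ≥0∞} (h : ∀ y, f y ≤ g y + c) (x : E) :
    dyadicMaximal μ f x ≤ dyadicMaximal μ g x + c := by
  refine iSup_le fun k => ?_
  calc ⨍⁻ y in Metric.closedBall x (2 ^ k), f y ∂μ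
      ≤ ⨍⁻ y in Metric.closedBall x (2 ^ k), (g y + c) ∂μ := lintegral_mono h
    _ ≤ ⨍⁻ y in Metric.closedBall x (2 ^ k), g y ∂μ + c := by
        rw [laverage, lintegral_add_right _ measurable_const]
        refine add_le_add_right ?_ _
        exact (laverage_le_essSup _).trans (essSup_le_of_ae_le c (.of_forall fun _ => le_rfl))
    _ ≤ dyadicMaximal μ g x + c := by
        gcongr
        exact le_iSup (fun k : ℤ => ⨍⁻ y in Metric.closedBall x (2 ^ k), g y ∂μ) k

variable [NormedSpace ℝ E] [FiniteDimensional ℝ E] [μ.IsAddHaarMeasure]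

lemma setLIntegral_closedBall_le_dyadicMaximal (f : E → ℝ≥0∞) (x : E) {r : ℝ} (hr : 0 < r) :
    ∫⁻ y in Metric.closedBall x r, f y ∂μ
      ≤ μ (Metric.closedBall x (2 * r)) * dyadicMaximal μ f x := by
  obtain ⟨k, hk, hrk⟩ := exists_mem_Ioc_zpow hr one_lt_two
  have hkr : (2 : ℝ) ^ (k + 1) ≤ 2 * r := by
    rw [zpow_add_one₀ two_ne_zero, mul_comm]
    gcongr
  calc ∫⁻ y in Metric.closedBall x r, f y ∂μ
      ≤ ∫⁻ y in Metric.closedBall x (2 ^ (k + 1)), f y ∂μ :=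
        lintegral_mono_set (Metric.closedBall_subset_closedBall hrk)
    _ = μ (Metric.closedBall x (2 ^ (k + 1))) *
          ⨍⁻ y in Metric.closedBall x (2 ^ (k + 1)), f y ∂μ :=
        (measure_mul_setLAverage f measure_closedBall_lt_top.ne).symm
    _ ≤ μ (Metric.closedBall x (2 * r)) * dyadicMaximal μ f x := by
        gcongr
        exact le_iSup (fun k : ℤ => ⨍⁻ y in Metric.closedBall x (2 ^ k), f y ∂μ) (k + 1)

variable [BorelSpace E]

lemma measurable_dyadicMaximal {f : E → ℝ≥0∞} (hf : Measurable f) :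
    Measurable (dyadicMaximal μ f) := by
  refine Measurable.iSup fun k => ?_
  let S : Set (E × E) := {z | dist z.2 z.1 ≤ 2 ^ k}
  have hS : MeasurableSet S := measurableSet_le (by fun_prop) measurable_const
  simp only [setLAverage_eq, Measure.addHaar_closedBall_center μ]
  simp_rw [← lintegral_indicator Metric.isClosed_closedBall.measurableSet]
  exact (Measurable.lintegral_prod_right' (f := S.indicator fun z => f z.2)
    ((hf.comp measurable_snd).indicator hS)).div_const _

lemma mul_measure_le_of_forall_exists_closedBall {s : Set E} {f : E → ℝ≥0∞} {c : ℝ≥0∞} {R : ℝ}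
    (h : ∀ x ∈ s, ∃ r ∈ Ioc 0 R,
      c * μ (Metric.closedBall x r) ≤ ∫⁻ y in Metric.closedBall x r, f y ∂μ) :
    c * μ s ≤ 5 ^ Module.finrank ℝ E * ∫⁻ y, f y ∂μ := by
  choose! r hr hcr using h
  obtain ⟨u, hus, hdisj, hcov⟩ := Vitali.exists_disjoint_subfamily_covering_enlargement_closedBall
    s id r R (fun x hx => (hr x hx).2) 5 (by norm_num)
  simp only [id] at hdisj hcov
  have hu : u.Countable := hdisj.countable_of_nonempty_interior fun x hx =>
    ⟨x, Metric.ball_subset_interior_closedBall (Metric.mem_ball_self (hr x (hus hx)).1)⟩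
  have hsub : s ⊆ ⋃ x ∈ u, Metric.closedBall x (5 * r x) := fun x hx => by
    obtain ⟨y, hy, hxy⟩ := hcov x hx
    exact mem_biUnion hy (hxy (Metric.mem_closedBall_self (hr x hx).1.le))
  have hball (x : E) (hx : x ∈ u) : c * μ (Metric.closedBall x (5 * r x))
      ≤ 5 ^ Module.finrank ℝ E * ∫⁻ y in Metric.closedBall x (r x), f y ∂μ := by
    have hrx := (hr x (hus hx)).1.le
    rw [Measure.addHaar_closedBall_mul μ x (by norm_num) hrx, ENNReal.ofReal_pow (by norm_num),
      ENNReal.ofReal_ofNat, mul_left_comm]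
    gcongr
    rw [← Measure.addHaar_closedBall_center μ x]
    exact hcr x (hus hx)
  calc c * μ s ≤ c * ∑' x : u, μ (Metric.closedBall x (5 * r x)) := by
        gcongr
        exact (measure_mono hsub).trans (measure_biUnion_le μ hu _)
    _ ≤ ∑' x : u, 5 ^ Module.finrank ℝ E * ∫⁻ y in Metric.closedBall (x : E) (r x), f y ∂μ := by
        rw [← ENNReal.tsum_mul_left]
        exact ENNReal.tsum_le_tsum fun x => hball x x.2
    _ = 5 ^ Module.finrank ℝ E * ∫⁻ y in ⋃ x ∈ u, Metric.closedBall x (r x), f y ∂μ := by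
        rw [ENNReal.tsum_mul_left,
          ← lintegral_biUnion hu (fun x _ => Metric.isClosed_closedBall.measurableSet) hdisj]
    _ ≤ 5 ^ Module.finrank ℝ E * ∫⁻ y, f y ∂μ := by
        gcongr
        exact Measure.restrict_le_self

lemma mul_measure_lt_dyadicMaximal_le (f : E → ℝ≥0∞) (c : ℝ≥0∞) :
    c * μ {x | c < dyadicMaximal μ f x} ≤ 5 ^ Module.finrank ℝ E * ∫⁻ y, f y ∂μ := by
  let S (N : ℕ) : Set E := {x | ∃ k ≤ (N : ℤ), c < ⨍⁻ y in Metric.closedBall x (2 ^ k), f y ∂μ}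
  have hmono : Monotone S := fun M N hMN x ⟨k, hk, hck⟩ =>
    ⟨k, hk.trans (by exact_mod_cast hMN), hck⟩
  have hunion : {x | c < dyadicMaximal μ f x} = ⋃ N, S N := by
    ext x
    simp only [mem_ofPred_eq, dyadicMaximal, lt_iSup_iff, mem_iUnion, S]
    exact ⟨fun ⟨k, hk⟩ => ⟨k.toNat, k, k.self_le_toNat, hk⟩, fun ⟨_, k, _, hk⟩ => ⟨k, hk⟩⟩
  rw [hunion, hmono.measure_iUnion, ENNReal.mul_iSup]
  refine iSup_le fun N => mul_measure_le_of_forall_exists_closedBall (R := 2 ^ N) ?_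
  rintro x ⟨k, hk, hck⟩
  refine ⟨2 ^ k, ⟨by positivity, ?_⟩, ?_⟩
  · rw [← zpow_natCast]
    exact zpow_le_zpow_right₀ one_le_two hk
  · rw [setLAverage_eq] at hck
    exact (ENNReal.mul_lt_of_lt_div hck).le

lemma mul_measure_lt_half_dyadicMaximal_le {f : E → ℝ≥0∞} (hf : Measurable f) (c : ℝ≥0∞) :
    c * μ {x | c < dyadicMaximal μ f x / 2}
      ≤ 5 ^ Module.finrank ℝ E * ∫⁻ y in {y | c < f y}, f y ∂μ := by
  rw [← lintegral_indicator (measurableSet_lt measurable_const hf)]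
  refine le_trans ?_ (mul_measure_lt_dyadicMaximal_le _ c)
  refine mul_le_mul_right (measure_mono fun x hx => ?_) _
  have hfc (y : E) : f y ≤ {y | c < f y}.indicator f y + c := by
    by_cases hy : c < f y
    · rw [indicator_of_mem (by exact hy)]
      exact le_self_add
    · exact le_add_left (not_lt.1 hy)
  have hc : c ≠ ∞ := hx.ne_top
  rw [mem_ofPred_eq, ENNReal.lt_div_iff_mul_lt (.inl two_ne_zero) (.inl ENNReal.ofNat_ne_top),
    mul_two] at hx
  exact (ENNReal.add_lt_add_iff_right hc).1 (hx.trans_le (dyadicMaximal_le_add_const hfc x))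

lemma exists_lintegral_dyadicMaximal_rpow_le (μ : Measure E) [μ.IsAddHaarMeasure] {s : ℝ}
    (hs : 1 < s) :
    ∃ C : ℝ≥0∞, C ≠ ∞ ∧ ∀ f : E → ℝ≥0∞, Measurable f →
      ∫⁻ x, dyadicMaximal μ f x ^ s ∂μ ≤ C * ∫⁻ x, f x ^ s ∂μ := by
  have hs0 : 0 ≤ s := zero_le_one.trans hs.le
  refine ⟨2 ^ s * (ENNReal.ofReal (s / (s - 1)) * 5 ^ Module.finrank ℝ E), by finiteness,
    fun f hf => ?_⟩
  have hM : Measurable fun x => dyadicMaximal μ f x / 2 :=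
    (measurable_dyadicMaximal hf).div_const _
  calc ∫⁻ x, dyadicMaximal μ f x ^ s ∂μ
      = 2 ^ s * ∫⁻ x, (dyadicMaximal μ f x / 2) ^ s ∂μ := by
        rw [← lintegral_const_mul' _ _ (by finiteness)]
        refine lintegral_congr fun x => ?_
        rw [← ENNReal.mul_rpow_of_nonneg _ _ hs0,
          ENNReal.mul_div_cancel two_ne_zero ENNReal.ofNat_ne_top]
    _ ≤ _ := by
        rw [mul_assoc]
        gcongr
        exact lintegral_rpow_le_of_mul_meas_lt_le hf hM (by finiteness)
          (mul_measure_lt_half_dyadicMaximal_le hf) hs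

end MaximalFunction

section LogHolder

variable {E : Type*} [NormedAddCommGroup E]

/-- Log-Hölder continuity on the whole space with constant `c`: a logarithmic modulus of
continuity, and logarithmic decay towards the value `u` at infinity. For `p ∈ P^log` it is the
reciprocal `1 / p` that has this property. -/
structure IsLogHolder (c u : ℝ) (φ : E → ℝ) : Prop where
  abs_sub_le : ∀ x y, x ≠ y → |φ x - φ y| ≤ c / Real.log (Real.exp 1 + 1 / ‖x - y‖)
  abs_sub_limit_le : ∀ x, |φ x - u| ≤ c / Real.log (Real.exp 1 + ‖x‖)

lemma one_le_log_exp_one_add {r : ℝ} (hr : 0 ≤ r) : 1 ≤ Real.log (Real.exp 1 + r) := by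
  rw [Real.le_log_iff_exp_le (by positivity)]
  exact le_add_of_nonneg_right hr

lemma one_lt_exp_one_add {r : ℝ} (hr : 0 ≤ r) : 1 < Real.exp 1 + r :=
  (Real.one_lt_exp_iff.2 one_pos).trans_le (le_add_of_nonneg_right hr)

lemma rpow_le_exp_of_le_div_log {a θ c : ℝ} (ha : 1 < a) (h : θ ≤ c / Real.log a) :
    a ^ θ ≤ Real.exp c := by
  rw [Real.rpow_def_of_pos (one_pos.trans ha), mul_comm]
  exact Real.exp_le_exp.2 ((le_div_iff₀ (Real.log_pos ha)).1 h)

lemma rpow_le_exp_mul_rpow_add {a b m s t Q c : ℝ} (ha0 : 0 ≤ a) (ha1 : a ≤ 1) (hb : 1 < b)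
    (hm : 0 ≤ m) (hc : 0 ≤ c) (hs : 0 < s) (ht : 0 < t) (htQ : t ≤ Q)
    (hst : 1 / s - 1 / t ≤ c / Real.log b) :
    a ^ s ≤ Real.exp (Q * c) ^ m * a ^ t + b ^ (-m) := by
  have hb0 : 0 < b := one_pos.trans hb
  have hQ : 0 ≤ Q := ht.le.trans htQ
  rcases le_or_gt (a ^ s) (b ^ (-m)) with hsmall | hlarge
  · exact hsmall.trans (le_add_of_nonneg_left (by positivity))
  refine le_add_of_le_of_nonneg ?_ (by positivity)
  rcases le_total t s with hts | hts
  · refine (Real.rpow_le_rpow_of_exponent_ge' ha0 ha1 ht.le hts).trans ?_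
    exact le_mul_of_one_le_left (by positivity)
      (Real.one_le_rpow (Real.one_le_exp (by positivity)) hm)
  have hθ0 : 0 ≤ t / s - 1 := sub_nonneg.2 ((one_le_div hs).2 hts)
  have hθ : t / s - 1 ≤ Q * c / Real.log b := by
    have hbt : t * (1 / s - 1 / t) = t / s - 1 := by field_simp
    rw [← hbt, mul_div_assoc]
    exact mul_le_mul htQ hst (sub_nonneg.2 (one_div_le_one_div_of_le hs hts)) hQ
  have hdefect : 1 ≤ Real.exp (Q * c) ^ m * (a ^ s) ^ (t / s - 1) := by
    calc 1 = (b ^ (t / s - 1)) ^ m * (b ^ (-m)) ^ (t / s - 1) := by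
          rw [← Real.rpow_mul hb0.le, ← Real.rpow_mul hb0.le, ← Real.rpow_add hb0,
            mul_comm, neg_mul, add_neg_cancel, Real.rpow_zero]
      _ ≤ Real.exp (Q * c) ^ m * (a ^ s) ^ (t / s - 1) := by
          gcongr
          exact rpow_le_exp_of_le_div_log hb hθ
  calc a ^ s ≤ a ^ s * (Real.exp (Q * c) ^ m * (a ^ s) ^ (t / s - 1)) :=
        le_mul_of_one_le_right (by positivity) hdefect
    _ = Real.exp (Q * c) ^ m * a ^ t := by
        have has : 0 < a ^ s := (by positivity : (0 : ℝ) ≤ b ^ (-m)).trans_lt hlarge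
        rw [mul_left_comm, ← Real.rpow_one_add' has.le (by positivity), ← Real.rpow_mul ha0,
          add_sub_cancel, mul_div_cancel₀ _ hs.ne']

lemma one_div_mul_clamp_mem_Icc {a b : ℝ} (ha : 0 < a) (hab : a ≤ b) (t : ℝ) :
    1 / (a * max (1 / b) (min (1 / a) t)) ∈ Icc 1 (b / a) := by
  have hlow : a / b ≤ a * max (1 / b) (min (1 / a) t) := by
    rw [div_eq_mul_one_div]
    exact mul_le_mul_of_nonneg_left (le_max_left _ _) ha.le
  have hupp : a * max (1 / b) (min (1 / a) t) ≤ 1 := by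
    rw [← le_div_iff₀' ha]
    exact max_le (one_div_le_one_div_of_le ha hab) (min_le_left _ _)
  have hb : 0 < b := ha.trans_le hab
  have hpos := (div_pos ha hb).trans_le hlow
  exact ⟨(one_le_div hpos).2 hupp, by rwa [one_div_le hpos (by positivity), one_div_div]⟩

lemma add_add_rpow_le {s : ℝ} (hs : 1 ≤ s) (a b c : ℝ≥0∞) :
    (a + b + c) ^ s ≤ 2 ^ (s - 1) * (2 ^ (s - 1) * (a ^ s + b ^ s) + c ^ s) := by
  refine (ENNReal.rpow_add_le_mul_rpow_add_rpow _ _ hs).trans ?_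
  gcongr
  exact ENNReal.rpow_add_le_mul_rpow_add_rpow _ _ hs

lemma laverage_rpow_le {X : Type*} [MeasurableSpace X] {μ : Measure X} [IsFiniteMeasure μ]
    {f : X → ℝ≥0∞} (hf : AEMeasurable f μ) {s : ℝ} (hs : 1 ≤ s) :
    (⨍⁻ x, f x ∂μ) ^ s ≤ ⨍⁻ x, f x ^ s ∂μ := by
  have hs0 : 0 < s := one_pos.trans_le hs
  rcases eq_zero_or_neZero μ with rfl | hμ
  · simp [hs0]
  have hmono := eLpNorm'_le_eLpNorm'_of_exponent_le one_pos hs ((μ univ)⁻¹ • μ)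
    (hf.smul_measure _).aestronglyMeasurable
  simp only [eLpNorm', enorm_eq_self, ENNReal.rpow_one, div_one] at hmono
  rwa [one_div, ENNReal.le_rpow_inv_iff hs0] at hmono

lemma laverage_rpow_le_indicator_add_compl {X : Type*} [MeasurableSpace X] {μ : Measure X}
    {f : X → ℝ≥0∞} (hf : Measurable f) {T : Set X} (hT : MeasurableSet T) {s : ℝ} (hs : 1 ≤ s) :
    (⨍⁻ x, f x ∂μ) ^ s
      ≤ 2 ^ (s - 1) * ((⨍⁻ x, T.indicator f x ∂μ) ^ s + (⨍⁻ x, Tᶜ.indicator f x ∂μ) ^ s) := by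
  have hsplit : ⨍⁻ x, f x ∂μ = ⨍⁻ x, T.indicator f x ∂μ + ⨍⁻ x, Tᶜ.indicator f x ∂μ := by
    rw [laverage, laverage, laverage, ← lintegral_add_left (hf.indicator hT)]
    simp only [indicator_self_add_compl_apply]
  rw [hsplit]
  exact ENNReal.rpow_add_le_mul_rpow_add_rpow _ _ hs

section Measure

variable [NormedSpace ℝ E]

/-- The integrable weight that absorbs the error made by replacing a log-Hölder exponent by its
value at infinity. -/
def decayWeight (x : E) : ℝ≥0∞ :=
  ENNReal.ofReal ((Real.exp 1 + ‖x‖) ^ (-(Module.finrank ℝ E + 1 : ℝ)))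

lemma exists_rpow_le_mul_rpow_add_decayWeight {Q c : ℝ} (hc : 0 ≤ c) :
    ∃ K : ℝ≥0∞, K ≠ ∞ ∧ ∀ (x : E) (a : ℝ≥0∞) (s t : ℝ), a ≤ 1 → 0 < s → 0 < t → t ≤ Q →
      1 / s - 1 / t ≤ c / Real.log (Real.exp 1 + ‖x‖) → a ^ s ≤ K * a ^ t + decayWeight x := by
  refine ⟨_, ENNReal.ofReal_ne_top (r := Real.exp (Q * c) ^ (Module.finrank ℝ E + 1 : ℝ)), ?_⟩
  intro x a s t ha hs ht htQ hst
  lift a to NNReal using ne_top_of_le_ne_top ENNReal.one_ne_top ha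
  have ha0 : (0 : ℝ) ≤ a := a.2
  rw [decayWeight, ← ENNReal.ofReal_coe_nnreal, ENNReal.ofReal_rpow_of_nonneg ha0 hs.le,
    ENNReal.ofReal_rpow_of_nonneg ha0 ht.le, ← ENNReal.ofReal_mul (by positivity),
    ← ENNReal.ofReal_add (by positivity) (by positivity)]
  exact ENNReal.ofReal_le_ofReal (rpow_le_exp_mul_rpow_add ha0 (by exact_mod_cast ha)
    (one_lt_exp_one_add (norm_nonneg x)) (by positivity) hc hs ht htQ hst)

variable [MeasurableSpace E] [BorelSpace E]

@[fun_prop]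
lemma measurable_decayWeight : Measurable (decayWeight : E → ℝ≥0∞) := by
  unfold decayWeight
  fun_prop

variable [FiniteDimensional ℝ E]

lemma lintegral_decayWeight_rpow_lt_top (μ : Measure E) [μ.IsAddHaarMeasure] {s : ℝ} (hs : 1 ≤ s) :
    ∫⁻ x, decayWeight x ^ s ∂μ < ∞ := by
  have hint := integrable_one_add_norm (μ := μ) (lt_add_one (Module.finrank ℝ E : ℝ))
  refine (lintegral_mono fun x => ?_).trans_lt hint.lintegral_lt_top
  have hbase : 1 + ‖x‖ ≤ Real.exp 1 + ‖x‖ := by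
    gcongr
    exact Real.one_le_exp zero_le_one
  have hle_one : decayWeight x ≤ 1 := ENNReal.ofReal_le_one.2 <|
    Real.rpow_le_one_of_one_le_of_nonpos (one_lt_exp_one_add (norm_nonneg x)).le
      (by linarith [Nat.cast_nonneg (α := ℝ) (Module.finrank ℝ E)])
  calc decayWeight x ^ s ≤ decayWeight x := by
        simpa using ENNReal.rpow_le_rpow_of_exponent_ge hle_one hs
    _ ≤ ENNReal.ofReal ((1 + ‖x‖) ^ (-(Module.finrank ℝ E + 1 : ℝ))) :=
        ENNReal.ofReal_le_ofReal (Real.rpow_le_rpow_of_nonpos (by positivity) hbase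
          (by linarith [Nat.cast_nonneg (α := ℝ) (Module.finrank ℝ E)]))

lemma exists_inv_measure_closedBall_rpow_le (μ : Measure E) [μ.IsAddHaarMeasure] {c : ℝ}
    (hc : 0 ≤ c) :
    ∃ K : ℝ≥0∞, K ≠ ∞ ∧ ∀ (x : E) (r θ : ℝ), 0 < r → 0 ≤ θ →
      θ ≤ c / Real.log (Real.exp 1 + 1 / r) → (μ (Metric.closedBall x r))⁻¹ ^ θ ≤ K := by
  set d := Module.finrank ℝ E
  set V := μ (Metric.ball (0 : E) 1)
  have hV0 : V ≠ 0 := (Metric.measure_ball_pos μ 0 one_pos).ne'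
  have hVtop : V ≠ ∞ := measure_ball_lt_top.ne
  refine ⟨ENNReal.ofReal (Real.exp c) ^ d * (1 + V⁻¹) ^ c, by finiteness, ?_⟩
  intro x r θ hr hθ hθc
  have hr' : 0 ≤ 1 / r := by positivity
  have hθ1 : θ ≤ c := hθc.trans (div_le_self hc (one_le_log_exp_one_add hr'))
  have hball : (μ (Metric.closedBall x r))⁻¹ ≤ ENNReal.ofReal (Real.exp 1 + 1 / r) ^ d * V⁻¹ := by
    rw [Measure.addHaar_closedBall μ x hr.le, ENNReal.mul_inv (.inr hVtop) (.inr hV0),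
      ← ENNReal.ofReal_inv_of_pos (by positivity), ← ENNReal.ofReal_pow (by positivity), ← inv_pow]
    gcongr
    rw [← one_div]
    exact le_add_of_nonneg_left (by positivity)
  calc (μ (Metric.closedBall x r))⁻¹ ^ θ
      ≤ (ENNReal.ofReal (Real.exp 1 + 1 / r) ^ d * V⁻¹) ^ θ := by gcongr
    _ = ENNReal.ofReal ((Real.exp 1 + 1 / r) ^ θ) ^ d * V⁻¹ ^ θ := by
        rw [ENNReal.mul_rpow_of_nonneg _ _ hθ, ← ENNReal.rpow_natCast_mul, mul_comm (d : ℝ),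
          ENNReal.rpow_mul_natCast, ENNReal.ofReal_rpow_of_nonneg (by positivity) hθ]
    _ ≤ ENNReal.ofReal (Real.exp c) ^ d * (1 + V⁻¹) ^ c := by
        gcongr
        · exact rpow_le_exp_of_le_div_log (one_lt_exp_one_add hr') hθc
        · exact (ENNReal.rpow_le_rpow le_add_self hθ).trans
            (ENNReal.rpow_le_rpow_of_exponent_le le_self_add hθ1)

end Measure

namespace IsLogHolder

variable {c u : ℝ} {φ : E → ℝ}

lemma const_nonneg (h : IsLogHolder c u φ) : 0 ≤ c := by
  have h0 := (abs_nonneg _).trans (h.abs_sub_limit_le 0)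
  rwa [norm_zero, add_zero, Real.log_exp, div_one] at h0

lemma comp_lipschitzWith (h : IsLogHolder c u φ) {K : NNReal} {g : ℝ → ℝ}
    (hg : LipschitzWith K g) : IsLogHolder (K * c) (g u) (fun x => g (φ x)) where
  abs_sub_le x y hxy := by
    rw [mul_div_assoc]
    exact (hg.dist_le_mul _ _).trans (by gcongr; exact h.abs_sub_le x y hxy)
  abs_sub_limit_le x := by
    rw [mul_div_assoc]
    exact (hg.dist_le_mul _ _).trans (by gcongr; exact h.abs_sub_limit_le x)

lemma abs_sub_le_of_mem_closedBall (h : IsLogHolder c u φ) {x y : E} {r : ℝ}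
    (hy : y ∈ Metric.closedBall x r) : |φ x - φ y| ≤ c / Real.log (Real.exp 1 + 1 / r) := by
  have hr : 0 ≤ r := dist_nonneg.trans hy
  have hc := h.const_nonneg
  have hlog : 0 < Real.log (Real.exp 1 + 1 / r) :=
    one_pos.trans_le (one_le_log_exp_one_add (by positivity))
  rcases eq_or_ne x y with rfl | hxy
  · rw [sub_self, abs_zero]
    positivity
  have hxy0 : 0 < ‖x - y‖ := norm_pos_iff.2 (sub_ne_zero.2 hxy)
  have hyr : ‖x - y‖ ≤ r := by rwa [← dist_eq_norm, ← Metric.mem_closedBall']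
  refine (h.abs_sub_le x y hxy).trans ?_
  gcongr

lemma exists_le_on_closedBall {q : E → ℝ} {Q : ℝ} (h : IsLogHolder c u fun x => 1 / q x)
    (hq : ∀ x, q x ∈ Icc 1 Q) (x : E) {r : ℝ} (hr : 0 < r) :
    ∃ m, 1 ≤ m ∧ (∀ y ∈ Metric.closedBall x r, m ≤ q y) ∧
      q x / m - 1 ≤ Q * c / Real.log (Real.exp 1 + 1 / r) := by
  have hx : 0 < q x := one_pos.trans_le (hq x).1
  set L := Real.log (Real.exp 1 + 1 / r)
  have hL : 0 < L := one_pos.trans_le (one_le_log_exp_one_add (by positivity))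
  have hcL : 0 ≤ c / L := div_nonneg h.const_nonneg hL.le
  have hD : 0 < 1 / q x + c / L := by positivity
  refine ⟨max 1 (1 / (1 / q x + c / L)), le_max_left _ _, fun y hy => max_le (hq y).1 ?_, ?_⟩
  · have hy0 : 0 < q y := one_pos.trans_le (hq y).1
    rw [one_div_le hD hy0]
    linarith [neg_le_of_abs_le (h.abs_sub_le_of_mem_closedBall hy)]
  · calc q x / max 1 (1 / (1 / q x + c / L)) - 1
        ≤ q x / (1 / (1 / q x + c / L)) - 1 := by
          gcongr
          exact le_max_right _ _
      _ = q x * (c / L) := by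
          field_simp
          ring
      _ ≤ Q * c / L := by
          rw [mul_div_assoc]
          gcongr
          exact (hq x).2

variable [NormedSpace ℝ E] [MeasurableSpace E] [BorelSpace E] {q : E → ℝ} {Q : ℝ}

lemma exists_laverage_rpow_le_of_le_one (h : IsLogHolder c (1 / u) fun x => 1 / q x)
    (hq : ∀ x, q x ∈ Icc 1 Q) (hu : u ∈ Icc 1 Q) :
    ∃ K : ℝ≥0∞, K ≠ ∞ ∧ ∀ (ν : Measure E) [IsFiniteMeasure ν] (l : E → ℝ≥0∞), Measurable l →
      (∀ y, l y ≤ 1) → ∀ x, (⨍⁻ y, l y ∂ν) ^ q x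
        ≤ K * (⨍⁻ y, l y ^ q y ∂ν + ⨍⁻ y, decayWeight y ∂ν) + decayWeight x := by
  obtain ⟨K, hK, hKle⟩ := exists_rpow_le_mul_rpow_add_decayWeight (E := E) (Q := Q) h.const_nonneg
  have hq0 (x : E) : 0 < q x := one_pos.trans_le (hq x).1
  have hu0 : 0 < u := one_pos.trans_le hu.1
  refine ⟨K * max K 1, by finiteness, fun ν _ l hl hl1 x => ?_⟩
  have havg : ⨍⁻ y, l y ∂ν ≤ 1 :=
    (laverage_le_essSup _).trans (essSup_le_of_ae_le 1 (.of_forall hl1))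
  refine (hKle x _ _ _ havg (hq0 x) hu0 hu.2
    ((le_abs_self _).trans (h.abs_sub_limit_le x))).trans ?_
  rw [mul_assoc]
  gcongr
  calc (⨍⁻ y, l y ∂ν) ^ u ≤ ⨍⁻ y, l y ^ u ∂ν := laverage_rpow_le hl.aemeasurable hu.1
    _ ≤ ⨍⁻ y, (K * l y ^ q y + decayWeight y) ∂ν := lintegral_mono fun y =>
        hKle y _ _ _ (hl1 y) hu0 (hq0 y) (hq y).2
          ((le_abs_self _).trans ((abs_sub_comm _ _).trans_le (h.abs_sub_limit_le y)))
    _ = K * ⨍⁻ y, l y ^ q y ∂ν + ⨍⁻ y, decayWeight y ∂ν := by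
        rw [laverage, lintegral_add_right _ measurable_decayWeight, lintegral_const_mul' _ _ hK]
        rfl
    _ ≤ max K 1 * (⨍⁻ y, l y ^ q y ∂ν + ⨍⁻ y, decayWeight y ∂ν) := by
        rw [mul_add]
        gcongr
        · exact le_max_left _ _
        · exact le_mul_of_one_le_left' (le_max_right _ _)

variable [FiniteDimensional ℝ E] {μ : Measure E}

lemma exists_setLAverage_rpow_le_of_one_le [μ.IsAddHaarMeasure]
    (h : IsLogHolder c u fun x => 1 / q x) (hq : ∀ x, q x ∈ Icc 1 Q) :
    ∃ K : ℝ≥0∞, K ≠ ∞ ∧ ∀ g : E → ℝ≥0∞, Measurable g → (∀ y, g y = 0 ∨ 1 ≤ g y) →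
      ∫⁻ y, g y ^ q y ∂μ ≤ 1 → ∀ x r, 0 < r →
        (⨍⁻ y in Metric.closedBall x r, g y ∂μ) ^ q x
          ≤ K * ⨍⁻ y in Metric.closedBall x r, g y ^ q y ∂μ := by
  have hQ : 1 ≤ Q := (hq 0).1.trans (hq 0).2
  obtain ⟨K, hK, hKball⟩ := exists_inv_measure_closedBall_rpow_le μ
    (mul_nonneg (zero_le_one.trans hQ) h.const_nonneg)
  refine ⟨K, hK, fun g hg hg1 hgq x r hr => ?_⟩
  have : IsFiniteMeasure (μ.restrict (Metric.closedBall x r)) :=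
    ⟨by simpa using measure_closedBall_lt_top⟩
  obtain ⟨m, hm1, hmq, hmx⟩ := h.exists_le_on_closedBall hq x hr
  have hm0 : 0 < m := one_pos.trans_le hm1
  have hθ : 0 ≤ q x / m - 1 :=
    sub_nonneg.2 ((one_le_div hm0).2 (hmq x (Metric.mem_closedBall_self hr.le)))
  set A := ⨍⁻ y in Metric.closedBall x r, g y ∂μ
  set I := ⨍⁻ y in Metric.closedBall x r, g y ^ q y ∂μ
  have hAI : A ^ m ≤ I := by
    refine (laverage_rpow_le hg.aemeasurable hm1).trans (lintegral_mono_ae ?_)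
    refine Measure.ae_smul_measure ?_ _
    filter_upwards [ae_restrict_mem measurableSet_closedBall] with y hy
    rcases hg1 y with h0 | h1
    · rw [h0, ENNReal.zero_rpow_of_pos hm0, ENNReal.zero_rpow_of_pos (one_pos.trans_le (hq y).1)]
    · exact ENNReal.rpow_le_rpow_of_exponent_le h1 (hmq y hy)
  have hIB : I ≤ (μ (Metric.closedBall x r))⁻¹ := by
    rw [← one_div]
    exact (setLAverage_eq _ _ _).trans_le
      (ENNReal.div_le_div_right ((setLIntegral_le_lintegral _ _).trans hgq) _)
  calc A ^ q x = (A ^ m) ^ (q x / m - 1) * A ^ m := by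
        nth_rw 2 [← ENNReal.rpow_one (A ^ m)]
        rw [← ENNReal.rpow_add_of_nonneg _ _ hθ zero_le_one, sub_add_cancel, ← ENNReal.rpow_mul,
          mul_div_cancel₀ _ hm0.ne']
    _ ≤ (μ (Metric.closedBall x r))⁻¹ ^ (q x / m - 1) * I := by
        gcongr
        exact hAI.trans hIB
    _ ≤ K * I := by
        gcongr
        exact hKball x r _ hr hθ hmx

lemma exists_setLAverage_rpow_le [μ.IsAddHaarMeasure] (h : IsLogHolder c (1 / u) fun x => 1 / q x)
    (hq : ∀ x, q x ∈ Icc 1 Q) (hu : u ∈ Icc 1 Q) :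
    ∃ K : ℝ≥0∞, K ≠ ∞ ∧ ∀ f : E → ℝ≥0∞, Measurable f → ∫⁻ y in {y | 1 < f y}, f y ^ q y ∂μ ≤ 1 →
      ∀ x r, 0 < r → (⨍⁻ y in Metric.closedBall x r, f y ∂μ) ^ q x
        ≤ K * (⨍⁻ y in Metric.closedBall x r, f y ^ q y ∂μ
          + ⨍⁻ y in Metric.closedBall x r, decayWeight y ∂μ + decayWeight x) := by
  obtain ⟨K₁, hK₁, hlarge⟩ := h.exists_setLAverage_rpow_le_of_one_le (μ := μ) hq
  obtain ⟨K₂, hK₂, hsmall⟩ := h.exists_laverage_rpow_le_of_le_one hq hu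
  have hq0 (x : E) : 0 < q x := one_pos.trans_le (hq x).1
  have : 0 ≤ Q := (hq0 0).le.trans (hq 0).2
  refine ⟨2 ^ Q * (K₁ + (K₂ + 1)), by finiteness, fun f hf hfq x r hr => ?_⟩
  set B := Metric.closedBall x r
  have : IsFiniteMeasure (μ.restrict B) := ⟨by simpa using measure_closedBall_lt_top⟩
  set I := ⨍⁻ y in B, f y ^ q y ∂μ
  set W := ⨍⁻ y in B, decayWeight y ∂μ
  let T : Set E := {y | 1 < f y}
  have hT : MeasurableSet T := measurableSet_lt measurable_const hf
  have hI (S : Set E) : ⨍⁻ y in B, S.indicator f y ^ q y ∂μ ≤ I :=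
    lintegral_mono fun y => ENNReal.rpow_le_rpow (indicator_le_self _ _ y) (hq0 y).le
  have hTq (y : E) : T.indicator f y ^ q y = T.indicator (fun y => f y ^ q y) y := by
    by_cases hy : y ∈ T <;> simp [hy, hq0]
  have hg : (⨍⁻ y in B, T.indicator f y ∂μ) ^ q x ≤ K₁ * (I + W + decayWeight x) := by
    refine (hlarge _ (hf.indicator hT) (fun y => ?_) ?_ x r hr).trans ?_
    · by_cases hy : y ∈ T
      · simpa only [indicator_of_mem hy] using .inr (le_of_lt hy)
      · exact .inl (indicator_of_notMem hy f)
    · simpa only [hTq, lintegral_indicator hT] using hfq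
    · gcongr
      exact (hI T).trans (le_self_add.trans le_self_add)
  have hl : (⨍⁻ y in B, Tᶜ.indicator f y ∂μ) ^ q x ≤ (K₂ + 1) * (I + W + decayWeight x) := by
    refine (hsmall _ _ (hf.indicator hT.compl) (fun y => ?_) x).trans ?_
    · exact indicator_apply_le' (fun hy => not_lt.1 hy) fun _ => zero_le_one
    · rw [add_mul, one_mul]
      refine add_le_add (mul_le_mul_right ?_ K₂) le_add_self
      exact (add_le_add_left (hI Tᶜ) W).trans le_self_add
  calc (⨍⁻ y in B, f y ∂μ) ^ q x
      ≤ 2 ^ (q x - 1) * ((⨍⁻ y in B, T.indicator f y ∂μ) ^ q x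
          + (⨍⁻ y in B, Tᶜ.indicator f y ∂μ) ^ q x) :=
        laverage_rpow_le_indicator_add_compl hf hT (hq x).1
    _ ≤ 2 ^ Q * (K₁ * (I + W + decayWeight x) + (K₂ + 1) * (I + W + decayWeight x)) := by
        gcongr
        · exact one_le_two
        · linarith [(hq x).2]
    _ = 2 ^ Q * (K₁ + (K₂ + 1)) * (I + W + decayWeight x) := by ring

lemma exists_dyadicMaximal_rpow_le [μ.IsAddHaarMeasure] (h : IsLogHolder c (1 / u) fun x => 1 / q x)
    (hq : ∀ x, q x ∈ Icc 1 Q) (hu : u ∈ Icc 1 Q) :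
    ∃ K : ℝ≥0∞, K ≠ ∞ ∧ ∀ f : E → ℝ≥0∞, Measurable f → ∫⁻ y in {y | 1 < f y}, f y ^ q y ∂μ ≤ 1 →
      ∀ x, dyadicMaximal μ f x ^ q x ≤ K * (dyadicMaximal μ (fun y => f y ^ q y) x
        + dyadicMaximal μ decayWeight x + decayWeight x) := by
  obtain ⟨K, hK, hball⟩ := h.exists_setLAverage_rpow_le (μ := μ) hq hu
  refine ⟨K, hK, fun f hf hfq x => ?_⟩
  have hqx : 0 < q x := one_pos.trans_le (hq x).1
  rw [← ENNReal.le_rpow_inv_iff hqx]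
  refine iSup_le fun k => ?_
  rw [ENNReal.le_rpow_inv_iff hqx]
  refine (hball f hf hfq x _ (by positivity)).trans ?_
  gcongr
  · exact le_iSup (fun k : ℤ => ⨍⁻ y in Metric.closedBall x (2 ^ k), f y ^ q y ∂μ) k
  · exact le_iSup (fun k : ℤ => ⨍⁻ y in Metric.closedBall x (2 ^ k), decayWeight y ∂μ) k

lemma exists_lintegral_dyadicMaximal_mul_rpow_le (μ : Measure E) [μ.IsAddHaarMeasure]
    (h : IsLogHolder c (1 / u) fun x => 1 / q x) (hqm : Measurable q) (hq : ∀ x, q x ∈ Icc 1 Q)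
    (hu : u ∈ Icc 1 Q) {s : ℝ} (hs : 1 < s) :
    ∃ C : ℝ≥0∞, C ≠ ∞ ∧ ∀ f : E → ℝ≥0∞, Measurable f → ∫⁻ y, f y ^ (s * q y) ∂μ ≤ 1 →
      ∫⁻ x, dyadicMaximal μ f x ^ (s * q x) ∂μ ≤ C := by
  obtain ⟨K, hK, hpt⟩ := h.exists_dyadicMaximal_rpow_le (μ := μ) hq hu
  obtain ⟨A, hA, hmax⟩ := exists_lintegral_dyadicMaximal_rpow_le μ hs
  have hs0 : 0 < s := one_pos.trans hs
  set D := ∫⁻ x, decayWeight x ^ s ∂μ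
  have hD : D ≠ ∞ := (lintegral_decayWeight_rpow_lt_top μ hs.le).ne
  refine ⟨K ^ s * (2 ^ (s - 1) * (2 ^ (s - 1) * (A * 1 + A * D) + D)), by finiteness, ?_⟩
  intro f hf hfq
  have hq0 (x : E) : 0 < q x := one_pos.trans_le (hq x).1
  have hlarge : ∫⁻ y in {y | 1 < f y}, f y ^ q y ∂μ ≤ 1 := by
    refine (setLIntegral_mono' (measurableSet_lt measurable_const hf) fun y hy => ?_).trans
      ((setLIntegral_le_lintegral _ _).trans hfq)
    exact ENNReal.rpow_le_rpow_of_exponent_le (le_of_lt hy)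
      (le_mul_of_one_le_left (hq0 y).le hs.le)
  set M := dyadicMaximal μ fun y => f y ^ q y
  set N := dyadicMaximal μ (decayWeight : E → ℝ≥0∞)
  have hN : Measurable N := measurable_dyadicMaximal measurable_decayWeight
  calc ∫⁻ x, dyadicMaximal μ f x ^ (s * q x) ∂μ
      ≤ ∫⁻ x, K ^ s * (2 ^ (s - 1) * (2 ^ (s - 1) * (M x ^ s + N x ^ s)
          + decayWeight x ^ s)) ∂μ := by
        refine lintegral_mono fun x => ?_
        rw [mul_comm s, ENNReal.rpow_mul]
        refine (ENNReal.rpow_le_rpow (hpt f hf hlarge x) hs0.le).trans ?_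
        rw [ENNReal.mul_rpow_of_nonneg _ _ hs0.le]
        exact mul_le_mul_right (add_add_rpow_le hs.le _ _ _) _
    _ = K ^ s * (2 ^ (s - 1) * (2 ^ (s - 1) * (∫⁻ x, M x ^ s ∂μ + ∫⁻ x, N x ^ s ∂μ) + D)) := by
        rw [lintegral_const_mul' _ _ (by finiteness), lintegral_const_mul' _ _ (by finiteness),
          lintegral_add_right _ (by fun_prop), lintegral_const_mul' _ _ (by finiteness),
          lintegral_add_right _ (by fun_prop)]
    _ ≤ K ^ s * (2 ^ (s - 1) * (2 ^ (s - 1) * (A * 1 + A * D) + D)) := by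
        gcongr
        · refine (hmax _ (hf.pow hqm)).trans (mul_le_mul_right ?_ A)
          simpa only [← ENNReal.rpow_mul, mul_comm] using hfq
        · exact hmax _ measurable_decayWeight

theorem exists_lintegral_dyadicMaximal_rpow_le {p : E → ℝ} (h : IsLogHolder c u fun x => 1 / p x)
    (μ : Measure E) [μ.IsAddHaarMeasure] (hpm : Measurable p) {pmin pmax : ℝ} (hpmin : 1 < pmin)
    (hp : ∀ᵐ x ∂μ, p x ∈ Icc pmin pmax) :
    ∃ C : ℝ≥0∞, C ≠ ∞ ∧ ∀ f : E → ℝ≥0∞, Measurable f → ∫⁻ y, f y ^ p y ∂μ ≤ 1 →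
      ∫⁻ x, dyadicMaximal μ f x ^ p x ∂μ ≤ C := by
  obtain ⟨x₀, hx₀⟩ := hp.exists
  have hpp : pmin ≤ pmax := hx₀.1.trans hx₀.2
  have hpmin0 : 0 < pmin := one_pos.trans hpmin
  let clamp (t : ℝ) : ℝ := pmin * max (1 / pmax) (min (1 / pmin) t)
  have hclamp : LipschitzWith ‖pmin‖₊ clamp :=
    ((lipschitzWith_smul pmin).comp
      ((LipschitzWith.id.const_min (1 / pmin)).const_max (1 / pmax))).weaken (mul_one _).le
  have hqp : ∀ᵐ x ∂μ, p x = pmin * (1 / clamp (1 / p x)) := by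
    filter_upwards [hp] with x hx
    have hx0 : 0 < p x := hpmin0.trans_le hx.1
    simp only [clamp]
    rw [min_eq_right (one_div_le_one_div_of_le hpmin0 hx.1),
      max_eq_right (one_div_le_one_div_of_le hx0 hx.2)]
    field_simp
  have hq : IsLogHolder (‖pmin‖₊ * c) (1 / (1 / clamp u))
      fun x => 1 / (1 / clamp (1 / p x)) := by
    simpa only [one_div_one_div] using h.comp_lipschitzWith hclamp
  obtain ⟨C, hC, hmax⟩ := hq.exists_lintegral_dyadicMaximal_mul_rpow_le μ (by fun_prop)
    (fun _ => one_div_mul_clamp_mem_Icc hpmin0 hpp _) (one_div_mul_clamp_mem_Icc hpmin0 hpp u) hpmin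
  refine ⟨C, hC, fun f hf hfp => ?_⟩
  have hcongr (g : E → ℝ≥0∞) :
      ∫⁻ y, g y ^ p y ∂μ = ∫⁻ y, g y ^ (pmin * (1 / clamp (1 / p y))) ∂μ :=
    lintegral_congr_ae (hqp.mono fun y hy => by simp only [← hy])
  exact (hcongr _).trans_le (hmax f hf ((hcongr f).symm.trans_le hfp))

end IsLogHolder

lemma IsPLog.exists_isLogHolder [MeasurableSpace E] {p : E → ℝ} (hp : IsPLog univ p) :
    ∃ c u, IsLogHolder c u fun x => 1 / p x := by
  obtain ⟨-, -, C₁, -, C₂, -, u, hloc, hlim⟩ := hp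
  refine ⟨max C₁ C₂, 1 / u, fun x y hxy => ?_, fun x => ?_⟩
  · have hlog := one_le_log_exp_one_add (r := 1 / ‖x - y‖) (by positivity)
    exact (hloc x (mem_univ x) y (mem_univ y) hxy).trans (by gcongr; exact le_max_left _ _)
  · have hlog := one_le_log_exp_one_add (norm_nonneg x)
    exact (hlim x (mem_univ x)).trans (by gcongr; exact le_max_right _ _)

lemma IsPLog.exists_lintegral_dyadicMaximal_div_rpow_le [NormedSpace ℝ E] [MeasurableSpace E]
    [BorelSpace E] [FiniteDimensional ℝ E] {p : E → ℝ} (hp : IsPLog univ p) (μ : Measure E)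
    [μ.IsAddHaarMeasure] {k : ℝ} (hk : 0 < k) (hpmin : ∃ pmin, k < pmin ∧ ∀ᵐ x ∂μ, pmin ≤ p x)
    (hpmax : ∃ pmax, ∀ᵐ x ∂μ, p x ≤ pmax) :
    ∃ C : ℝ≥0∞, C ≠ ∞ ∧ ∀ f : E → ℝ≥0∞, Measurable f → ∫⁻ y, f y ^ (p y / k) ∂μ ≤ 1 →
      ∫⁻ x, dyadicMaximal μ f x ^ (p x / k) ∂μ ≤ C := by
  obtain ⟨c, u, hlog⟩ := hp.exists_isLogHolder
  obtain ⟨pmin, hkp, hpmin⟩ := hpmin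
  obtain ⟨pmax, hpmax⟩ := hpmax
  have hlog' : IsLogHolder (‖k‖₊ * c) (k • u) fun x => 1 / (p x / k) := by
    simpa only [smul_eq_mul, mul_one_div, one_div_div] using
      hlog.comp_lipschitzWith (lipschitzWith_smul k)
  refine hlog'.exists_lintegral_dyadicMaximal_rpow_le μ (hp.1.div_const k)
    ((one_lt_div hk).2 hkp) (pmax := pmax / k) ?_
  filter_upwards [hpmin, hpmax] with x hx₁ hx₂
  exact ⟨by gcongr, by gcongr⟩

end LogHolder

section Hedberg

variable {E : Type*} [NormedAddCommGroup E] [NormedSpace ℝ E] [MeasurableSpace E] {μ : Measure E}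
  {β : ℝ}

lemma rieszPotential_eq_mul_div (β : ℝ) (f : E → ℝ≥0∞) {a : ℝ≥0∞} (ha0 : a ≠ 0) (ha : a ≠ ∞)
    (x : E) : rieszPotential μ β f x = a * rieszPotential μ β (fun y => f y / a) x := by
  simp only [rieszPotential, ← lintegral_const_mul' a _ ha, mul_left_comm a,
    ENNReal.mul_div_cancel ha0 ha]

lemma ofReal_rpow_le_mul_lintegral_Ioi {c ρ : ℝ} (hc : 0 < c) (hρ : 0 ≤ ρ) :
    ENNReal.ofReal (ρ ^ (-c))
      ≤ ENNReal.ofReal c * ∫⁻ s in Ioi ρ, ENNReal.ofReal (s ^ (-c - 1)) := by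
  rcases hρ.eq_or_lt with rfl | hρ
  · rw [Real.zero_rpow (neg_ne_zero.2 hc.ne'), ENNReal.ofReal_zero]
    exact zero_le
  · rw [lintegral_Ioi_rpow hc hρ, ← ENNReal.ofReal_mul hc.le, mul_div_cancel₀ _ hc.ne']

/- The choice `S = a ^ (-1 / (β + δ))` balances the two terms when `M` is replaced by some `a > M`,
which then tends to `M`. -/
lemma le_mul_rpow_of_forall_le_add {δ : ℝ} (hβ : 0 < β) (hδ : 0 < δ) {I M C : ℝ≥0∞} (hC : C ≠ ∞)
    (h : ∀ S : ℝ, 0 < S → I ≤ C * (M * ENNReal.ofReal (S ^ β) + ENNReal.ofReal (S ^ (-δ)))) :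
    I ≤ (2 * C + 1) * M ^ (δ / (β + δ)) := by
  have hθ : 0 < δ / (β + δ) := by positivity
  rcases eq_or_ne M ∞ with rfl | hM
  · rw [ENNReal.top_rpow_of_pos hθ, ENNReal.mul_top (by simp)]
    exact le_top
  have hbalance (a : ℝ≥0∞) (ha : M < a) (hatop : a ≠ ∞) :
      I ≤ (2 * C + 1) * a ^ (δ / (β + δ)) := by
    lift a to NNReal using hatop
    have ha0 : 0 < (a : ℝ) := ENNReal.coe_pos.1 (zero_le.trans_lt ha)
    have hnear : (a : ℝ) * ((a : ℝ) ^ (-1 / (β + δ))) ^ β = (a : ℝ) ^ (δ / (β + δ)) := by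
      rw [← Real.rpow_mul ha0.le, mul_comm, ← Real.rpow_add_one ha0.ne']
      congr 1
      field_simp
      ring
    have hfar : ((a : ℝ) ^ (-1 / (β + δ))) ^ (-δ) = (a : ℝ) ^ (δ / (β + δ)) := by
      rw [← Real.rpow_mul ha0.le]
      congr 1
      ring
    calc I ≤ C * (a * ENNReal.ofReal (((a : ℝ) ^ (-1 / (β + δ))) ^ β) +
            ENNReal.ofReal (((a : ℝ) ^ (-1 / (β + δ))) ^ (-δ))) :=
          (h _ (by positivity)).trans (mul_le_mul_right
            (add_le_add_left (mul_le_mul_left ha.le _) _) C)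
      _ = 2 * C * (a : ℝ≥0∞) ^ (δ / (β + δ)) := by
          rw [← ENNReal.ofReal_coe_nnreal, ← ENNReal.ofReal_mul ha0.le, hnear, hfar,
            ENNReal.ofReal_rpow_of_pos ha0]
          ring
      _ ≤ (2 * C + 1) * (a : ℝ≥0∞) ^ (δ / (β + δ)) := by
          gcongr
          exact le_self_add
  have hcont : Continuous fun a : ℝ≥0∞ => (2 * C + 1) * a ^ (δ / (β + δ)) :=
    (ENNReal.continuous_const_mul (by finiteness)).comp ENNReal.continuous_rpow_const
  have : (nhdsWithin M (Ioi M)).NeBot := nhdsGT_neBot_of_exists_gt ⟨∞, hM.lt_top⟩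
  refine ge_of_tendsto (hcont.tendsto M |>.mono_left (nhdsWithin_le_nhds (s := Ioi M))) ?_
  filter_upwards [self_mem_nhdsWithin, nhdsWithin_le_nhds (Iio_mem_nhds hM.lt_top)]
    with a ha hatop using hbalance a ha (ne_of_lt hatop)

variable [BorelSpace E] [FiniteDimensional ℝ E]

lemma rieszPotential_le_lintegral_closedBall [SFinite μ] (hβ : β < Module.finrank ℝ E)
    {f : E → ℝ≥0∞} (hf : Measurable f) (x : E) :
    rieszPotential μ β f x ≤ ENNReal.ofReal (Module.finrank ℝ E - β) *
      ∫⁻ s in Ioi (0 : ℝ), ENNReal.ofReal (s ^ (β - Module.finrank ℝ E - 1)) *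
        ∫⁻ y in Metric.closedBall x s, f y ∂μ := by
  set d := Module.finrank ℝ E
  let S : Set (E × ℝ) := {z | dist z.1 x ≤ z.2}
  have hS : MeasurableSet S := measurableSet_le (by fun_prop) measurable_snd
  let φ : E × ℝ → ℝ≥0∞ := S.indicator fun z => ENNReal.ofReal (z.2 ^ (β - d - 1)) * f z.1
  have hφ : Measurable φ := Measurable.indicator (by fun_prop) hS
  have hkernel (y : E) : ENNReal.ofReal (‖x - y‖ ^ (β - d)) * f y
      ≤ ENNReal.ofReal (d - β) * ∫⁻ s in Ioi (0 : ℝ), φ (y, s) := by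
    have hpow := ofReal_rpow_le_mul_lintegral_Ioi (sub_pos.2 hβ) (norm_nonneg (x - y))
    rw [neg_sub] at hpow
    refine (mul_le_mul_left hpow (f y)).trans ?_
    rw [mul_assoc, ← lintegral_mul_const _ (by fun_prop)]
    refine mul_le_mul_right ?_ _
    refine (setLIntegral_congr_fun measurableSet_Ioi fun s hs => ?_).trans_le
      (lintegral_mono_set (Ioi_subset_Ioi (norm_nonneg (x - y))))
    have hys : (y, s) ∈ S := (dist_comm y x).trans_le ((dist_eq_norm x y).trans_le (le_of_lt hs))
    simp only [φ, indicator_of_mem hys]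
  calc rieszPotential μ β f x
      ≤ ∫⁻ y, (ENNReal.ofReal (d - β) * ∫⁻ s in Ioi (0 : ℝ), φ (y, s)) ∂μ :=
        lintegral_mono hkernel
    _ = ENNReal.ofReal (d - β) * ∫⁻ s in Ioi (0 : ℝ), ∫⁻ y, φ (y, s) ∂μ := by
        rw [lintegral_const_mul' _ _ ENNReal.ofReal_ne_top]
        exact congrArg _ (lintegral_lintegral_swap hφ.aemeasurable)
    _ = ENNReal.ofReal (d - β) * ∫⁻ s in Ioi (0 : ℝ), ENNReal.ofReal (s ^ (β - d - 1)) *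
          ∫⁻ y in Metric.closedBall x s, f y ∂μ := by
        congr 2 with s
        rw [← lintegral_const_mul' _ _ ENNReal.ofReal_ne_top,
          ← lintegral_indicator measurableSet_closedBall]
        rfl

variable [μ.IsAddHaarMeasure]

lemma setLIntegral_closedBall_le_rpow {r : ℝ} (hr : 1 < r) {f : E → ℝ≥0∞} (hf : Measurable f)
    (hfr : ∫⁻ y, f y ^ r ∂μ ≤ 1) (x : E) {s : ℝ} (hs : 0 ≤ s) :
    ∫⁻ y in Metric.closedBall x s, f y ∂μ
      ≤ μ (Metric.ball 0 1) ^ (1 - 1 / r) *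
        ENNReal.ofReal (s ^ (Module.finrank ℝ E - Module.finrank ℝ E / r)) := by
  have hconj := Real.HolderConjugate.conjExponent hr
  have hexp : 1 / r.conjExponent = 1 - 1 / r :=
    eq_sub_of_add_eq' (by simpa only [one_div, inv_one] using hconj.one_div_add_one_div)
  have hexp0 : 0 ≤ 1 - 1 / r := hexp ▸ hconj.symm.one_div_nonneg
  have holder := ENNReal.lintegral_mul_le_Lp_mul_Lq (μ.restrict (Metric.closedBall x s)) hconj
    hf.aemeasurable (aemeasurable_const (b := (1 : ℝ≥0∞)))
  simp only [Pi.mul_apply, mul_one, ENNReal.one_rpow, hexp, lintegral_one,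
    Measure.restrict_apply_univ] at holder
  calc ∫⁻ y in Metric.closedBall x s, f y ∂μ
      ≤ (∫⁻ y in Metric.closedBall x s, f y ^ r ∂μ) ^ (1 / r) *
          μ (Metric.closedBall x s) ^ (1 - 1 / r) := holder
    _ ≤ 1 ^ (1 / r) * μ (Metric.closedBall x s) ^ (1 - 1 / r) := by
        gcongr
        exact (setLIntegral_le_lintegral _ _).trans hfr
    _ = μ (Metric.ball 0 1) ^ (1 - 1 / r) *
          ENNReal.ofReal (s ^ (Module.finrank ℝ E - Module.finrank ℝ E / r)) := by
        rw [ENNReal.one_rpow, one_mul, Measure.addHaar_closedBall μ x hs,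
          ENNReal.mul_rpow_of_nonneg _ _ hexp0, mul_comm,
          ENNReal.ofReal_rpow_of_nonneg (by positivity) hexp0, ← Real.rpow_natCast_mul hs,
          mul_sub, mul_one, mul_one_div]

lemma lintegral_Ioc_mul_closedBall_le (hβ : 0 < β) (f : E → ℝ≥0∞) (x : E) {S : ℝ} (hS : 0 ≤ S) :
    ∫⁻ s in Ioc 0 S, ENNReal.ofReal (s ^ (β - Module.finrank ℝ E - 1)) *
        ∫⁻ y in Metric.closedBall x s, f y ∂μ
      ≤ 2 ^ Module.finrank ℝ E * μ (Metric.ball 0 1) * dyadicMaximal μ f x *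
        ENNReal.ofReal (S ^ β / β) := by
  set d := Module.finrank ℝ E
  rw [← lintegral_Ioc_rpow hβ hS, ← lintegral_const_mul _ (by fun_prop)]
  refine setLIntegral_mono' measurableSet_Ioc fun s hs => ?_
  have hs0 : 0 < s := hs.1
  have hpow : s ^ (β - 1) = s ^ (β - d - 1) * s ^ d := by
    rw [← Real.rpow_add_natCast hs0.ne']
    ring_nf
  calc ENNReal.ofReal (s ^ (β - d - 1)) * ∫⁻ y in Metric.closedBall x s, f y ∂μ
      ≤ ENNReal.ofReal (s ^ (β - d - 1)) *
          (μ (Metric.closedBall x (2 * s)) * dyadicMaximal μ f x) := by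
        gcongr
        exact setLIntegral_closedBall_le_dyadicMaximal f x hs0
    _ = 2 ^ d * μ (Metric.ball 0 1) * dyadicMaximal μ f x * ENNReal.ofReal (s ^ (β - 1)) := by
        rw [Measure.addHaar_closedBall μ x (by positivity), mul_pow,
          ENNReal.ofReal_mul (by positivity), hpow, ENNReal.ofReal_mul (by positivity),
          ENNReal.ofReal_pow zero_le_two, ENNReal.ofReal_ofNat]
        ring

lemma lintegral_Ioi_mul_closedBall_le {r : ℝ} (hr : 1 < r) (hβr : β < Module.finrank ℝ E / r)
    {f : E → ℝ≥0∞} (hf : Measurable f) (hfr : ∫⁻ y, f y ^ r ∂μ ≤ 1) (x : E) {S : ℝ} (hS : 0 < S) :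
    ∫⁻ s in Ioi S, ENNReal.ofReal (s ^ (β - Module.finrank ℝ E - 1)) *
        ∫⁻ y in Metric.closedBall x s, f y ∂μ
      ≤ μ (Metric.ball 0 1) ^ (1 - 1 / r) *
        ENNReal.ofReal (S ^ (-(Module.finrank ℝ E / r - β)) / (Module.finrank ℝ E / r - β)) := by
  set d := Module.finrank ℝ E
  rw [← lintegral_Ioi_rpow (sub_pos.2 hβr) hS, ← lintegral_const_mul _ (by fun_prop)]
  refine setLIntegral_mono' measurableSet_Ioi fun s hs => ?_
  have hs0 : 0 < s := hS.trans hs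
  have hpow : s ^ (-(d / r - β) - 1) = s ^ (β - d - 1) * s ^ (d - d / r) := by
    rw [← Real.rpow_add hs0]
    ring_nf
  rw [hpow, ENNReal.ofReal_mul (by positivity), mul_left_comm]
  gcongr
  exact setLIntegral_closedBall_le_rpow hr hf hfr x hs0.le

lemma exists_rieszPotential_le_add (μ : Measure E) [μ.IsAddHaarMeasure] (hβ : 0 < β) {r : ℝ}
    (hr : 1 < r) (hβr : β < Module.finrank ℝ E / r) :
    ∃ C : ℝ≥0∞, C ≠ ∞ ∧ ∀ f : E → ℝ≥0∞, Measurable f → ∫⁻ y, f y ^ r ∂μ ≤ 1 → ∀ (x : E) (S : ℝ),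
      0 < S → rieszPotential μ β f x ≤ C * (dyadicMaximal μ f x * ENNReal.ofReal (S ^ β) +
        ENNReal.ofReal (S ^ (-(Module.finrank ℝ E / r - β)))) := by
  set d := Module.finrank ℝ E
  have hβd : β < d := hβr.trans_le (div_le_self d.cast_nonneg hr.le)
  have hr1 : 0 ≤ 1 - 1 / r := sub_nonneg.2 ((div_le_one (by positivity)).2 hr.le)
  set V := μ (Metric.ball 0 1)
  have hV : V ≠ ∞ := measure_ball_lt_top.ne
  set A := 2 ^ d * V * ENNReal.ofReal β⁻¹
  set B := V ^ (1 - 1 / r) * ENNReal.ofReal (d / r - β)⁻¹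
  refine ⟨ENNReal.ofReal (d - β) * (A + B), by finiteness, fun f hf hfr x S hS => ?_⟩
  set M := dyadicMaximal μ f x
  calc rieszPotential μ β f x
      ≤ ENNReal.ofReal (d - β) * ∫⁻ s in Ioi (0 : ℝ), ENNReal.ofReal (s ^ (β - d - 1)) *
          ∫⁻ y in Metric.closedBall x s, f y ∂μ := rieszPotential_le_lintegral_closedBall hβd hf x
    _ ≤ ENNReal.ofReal (d - β) * (2 ^ d * V * M * ENNReal.ofReal (S ^ β / β) +
          V ^ (1 - 1 / r) * ENNReal.ofReal (S ^ (-(d / r - β)) / (d / r - β))) := by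
        rw [← Ioc_union_Ioi_eq_Ioi hS.le]
        gcongr
        exact (lintegral_union_le _ _ _).trans (add_le_add
          (lintegral_Ioc_mul_closedBall_le hβ f x hS.le)
          (lintegral_Ioi_mul_closedBall_le hr hβr hf hfr x hS))
    _ = ENNReal.ofReal (d - β) * (A * (M * ENNReal.ofReal (S ^ β)) +
          B * ENNReal.ofReal (S ^ (-(d / r - β)))) := by
        rw [div_eq_mul_inv (S ^ β), div_eq_mul_inv (S ^ _), ENNReal.ofReal_mul (by positivity),
          ENNReal.ofReal_mul (by positivity)]
        ring
    _ ≤ ENNReal.ofReal (d - β) * (A + B) *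
          (M * ENNReal.ofReal (S ^ β) + ENNReal.ofReal (S ^ (-(d / r - β)))) := by
        rw [mul_assoc (ENNReal.ofReal (d - β)) (A + B), mul_add (A + B)]
        gcongr
        · exact le_self_add
        · exact le_add_self

theorem exists_rieszPotential_le_dyadicMaximal_rpow (μ : Measure E) [μ.IsAddHaarMeasure]
    (hβ : 0 < β) {r : ℝ} (hr : 1 < r) (hβr : β < Module.finrank ℝ E / r) :
    ∃ C : ℝ≥0∞, C ≠ ∞ ∧ ∀ f : E → ℝ≥0∞, Measurable f → ∫⁻ y, f y ^ r ∂μ ≤ 1 → ∀ x,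
      rieszPotential μ β f x ≤ C * dyadicMaximal μ f x ^ (1 - β * r / Module.finrank ℝ E) := by
  obtain ⟨C, hC, hsplit⟩ := exists_rieszPotential_le_add μ hβ hr hβr
  refine ⟨2 * C + 1, by finiteness, fun f hf hfr x => ?_⟩
  have hd : (Module.finrank ℝ E : ℝ) ≠ 0 := fun h => by
    rw [h, zero_div] at hβr
    exact hβ.not_gt hβr
  have hr0 : r ≠ 0 := (one_pos.trans hr).ne'
  convert le_mul_rpow_of_forall_le_add hβ (sub_pos.2 hβr) hC (hsplit f hf hfr x) using 3
  rw [add_sub_cancel]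
  field_simp

end Hedberg

section LuxemburgNorm

variable {Ω : Type*} [MeasurableSpace Ω] {μ : Measure Ω} {p : Ω → ℝ}

lemma lintegral_div_rpow_le_one_of_luxNorm_lt (hp : ∀ x, 0 ≤ p x) {f : Ω → ℝ≥0∞} {d : ℝ≥0∞}
    (hd : luxNorm μ p f < d) : ∫⁻ x, (f x / d) ^ p x ∂μ ≤ 1 := by
  obtain ⟨c, ⟨-, hc⟩, hcd⟩ := sInf_lt_iff.1 hd
  exact (lintegral_mono fun x =>
    ENNReal.rpow_le_rpow (ENNReal.div_le_div_left hcd.le _) (hp x)).trans hc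

lemma luxNorm_le_one_add_mul (hp : ∀ x, 1 ≤ p x) {f : Ω → ℝ≥0∞} {a C : ℝ≥0∞} (ha : a ≠ 0)
    (hC : C ≠ ∞) (h : ∫⁻ x, (f x / a) ^ p x ∂μ ≤ C) : luxNorm μ p f ≤ (1 + C) * a := by
  have hB : 1 ≤ 1 + C := le_self_add
  have hB0 : 1 + C ≠ 0 := (one_pos.trans_le hB).ne'
  have hBtop : 1 + C ≠ ∞ := by finiteness
  refine sInf_le ⟨pos_iff_ne_zero.2 (mul_ne_zero hB0 ha), ?_⟩
  calc ∫⁻ x, (f x / ((1 + C) * a)) ^ p x ∂μ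
      ≤ ∫⁻ x, (1 + C)⁻¹ * (f x / a) ^ p x ∂μ := by
        refine lintegral_mono fun x => ?_
        rw [div_eq_mul_inv, ENNReal.mul_inv (.inl hB0) (.inl hBtop), mul_left_comm,
          ← div_eq_mul_inv, ENNReal.mul_rpow_of_nonneg _ _ (zero_le_one.trans (hp x))]
        gcongr
        exact ENNReal.rpow_le_self_of_le_one (ENNReal.inv_le_one.2 hB) (hp x)
    _ = (1 + C)⁻¹ * ∫⁻ x, (f x / a) ^ p x ∂μ :=
        lintegral_const_mul' _ _ (ENNReal.inv_ne_top.2 hB0)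
    _ ≤ (1 + C)⁻¹ * (1 + C) := by
        gcongr
        exact h.trans le_add_self
    _ = 1 := ENNReal.inv_mul_cancel hB0 hBtop

lemma luxNorm_le_of_le_mul_rpow (hp : ∀ x, 1 ≤ p x) {f g : Ω → ℝ≥0∞} {k : ℝ} {a C : ℝ≥0∞}
    (ha : a ≠ 0) (hC : C ≠ ∞) (hfg : ∀ x, f x ≤ a * g x ^ (1 / k))
    (hg : ∫⁻ x, g x ^ (p x / k) ∂μ ≤ C) : luxNorm μ p f ≤ (1 + C) * a := by
  refine luxNorm_le_one_add_mul hp ha hC ((lintegral_mono fun x => ?_).trans hg)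
  rw [← one_div_mul_eq_div, ENNReal.rpow_mul]
  exact ENNReal.rpow_le_rpow (ENNReal.div_le_of_le_mul' (hfg x)) (zero_le_one.trans (hp x))

end LuxemburgNorm

section ExternalForce

variable {n : ℕ} [Nontrivial (Rn n)] {α r : ℝ}

lemma exists_timeSup_duhamel_gKer_le_dyadicMaximal_rpow (hα : 0 < α) (hα1 : α ≤ 1) (hr : 1 < r)
    (hαr : 2 * α < n / r) :
    ∃ A : ℝ≥0∞, A ≠ ∞ ∧ ∀ F : ℝ → Rn n → ℝ, Measurable (Function.uncurry F) → ∀ d : ℝ≥0∞, d ≠ 0 →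
      d ≠ ∞ → ∫⁻ y, (timeSup n F y / d) ^ r ≤ 1 → ∀ x, timeSup n (duhamel (gKer n α) F) x
        ≤ A * d * dyadicMaximal volume (fun y => timeSup n F y / d) x ^ (1 - 2 * α * r / n) := by
  have hαn : 2 * α < n := hαr.trans_le (div_le_self n.cast_nonneg hr.le)
  obtain ⟨K, hK, hriesz⟩ := exists_timeSup_duhamel_gKer_le hα hα1 hαn
  rw [← finrank_euclideanSpace_fin (𝕜 := ℝ) (n := n)] at hαr
  obtain ⟨C, hC, hhedberg⟩ := exists_rieszPotential_le_dyadicMaximal_rpow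
    (volume : Measure (Rn n)) (by positivity : 0 < 2 * α) hr hαr
  rw [finrank_euclideanSpace_fin] at hhedberg
  refine ⟨K * C, by finiteness, fun F hF d hd0 hd hFd x => ?_⟩
  calc timeSup n (duhamel (gKer n α) F) x
      ≤ K * (d * rieszPotential volume (2 * α) (fun y => timeSup n F y / d) x) := by
        rw [← rieszPotential_eq_mul_div _ _ hd0 hd]
        exact hriesz F hF x
    _ ≤ K * (d * (C *
          dyadicMaximal volume (fun y => timeSup n F y / d) x ^ (1 - 2 * α * r / n))) := by
        gcongr
        exact hhedberg _ ((measurable_timeSup hF).div_const d) hFd x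
    _ = K * C * d *
          dyadicMaximal volume (fun y => timeSup n F y / d) x ^ (1 - 2 * α * r / n) := by
        ring

lemma exists_luxNorm_timeSup_duhamel_gKer_le (hα : 0 < α) (hα1 : α ≤ 1) (hr : 1 < r)
    {k : ℝ} (hk0 : 0 < k) (hk : 1 - 2 * α * r / n = 1 / k) {q : Rn n → ℝ}
    (hq : ∀ x, 1 ≤ q x)
    (hmax : ∃ C : ℝ≥0∞, C ≠ ∞ ∧ ∀ f : Rn n → ℝ≥0∞, Measurable f → ∫⁻ y, f y ^ (q y / k) ≤ 1 →
      ∫⁻ x, dyadicMaximal volume f x ^ (q x / k) ≤ C) :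
    ∃ C : ℝ≥0∞, C ≠ ∞ ∧ ∀ F : ℝ → Rn n → ℝ, Measurable (Function.uncurry F) →
      luxNorm volume q (timeSup n (duhamel (gKer n α) F))
        ≤ C * mixedN n (fun x => q x / k) r F := by
  have hn : 0 < (n : ℝ) := by
    rw [← finrank_euclideanSpace_fin (𝕜 := ℝ) (n := n)]
    exact_mod_cast Module.finrank_pos
  have hαr : 2 * α < n / r := by
    rw [lt_div_iff₀ (one_pos.trans hr), ← div_lt_one hn, ← sub_pos, hk]
    exact one_div_pos.2 hk0
  obtain ⟨A, hA, hpt⟩ := exists_timeSup_duhamel_gKer_le_dyadicMaximal_rpow hα hα1 hr hαr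
  obtain ⟨C, hC, hmax⟩ := hmax
  refine ⟨(1 + C) * (A + 1), by finiteness, fun F hF => ?_⟩
  have hC0 : (1 + C) * (A + 1) ≠ 0 := by simp
  refine ENNReal.le_mul_of_forall_lt (.inl hC0) (.inl (by finiteness)) fun B hB d hd => ?_
  rcases eq_or_ne d ∞ with rfl | hdtop
  · rw [ENNReal.mul_top (zero_le.trans_lt hB).ne']
    exact le_top
  have hd0 : d ≠ 0 := (zero_le.trans_lt hd).ne'
  have hFq : ∫⁻ x, (timeSup n F x / d) ^ (q x / k) ≤ 1 := lintegral_div_rpow_le_one_of_luxNorm_lt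
    (fun x => div_nonneg (zero_le_one.trans (hq x)) hk0.le) ((le_max_left _ _).trans_lt hd)
  have hFr : ∫⁻ x, (timeSup n F x / d) ^ r ≤ 1 := lintegral_div_rpow_le_one_of_luxNorm_lt
    (p := fun _ => r) (fun _ => (one_pos.trans hr).le) ((le_max_right _ _).trans_lt hd)
  calc luxNorm volume q (timeSup n (duhamel (gKer n α) F)) ≤ (1 + C) * ((A + 1) * d) := by
        refine luxNorm_le_of_le_mul_rpow hq (mul_ne_zero (by simp) hd0) hC (fun x => ?_)
          (hmax _ ((measurable_timeSup hF).div_const d) hFq)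
        rw [← hk]
        refine (hpt F hF d hd0 hdtop hFr x).trans ?_
        gcongr
        exact le_self_add
    _ ≤ B * d := by
        rw [← mul_assoc]
        gcongr

theorem exists_mixedN_duhamel_gKer_le (hα : 0 < α) (hα1 : α ≤ 1) (hr : 1 < r) {k : ℝ} (hk1 : 1 < k)
    (hk : 1 - 2 * α * r / n = 1 / k) {p : Rn n → ℝ} (hp : IsPLog univ p)
    (hpmin : ∃ pmin, k < pmin ∧ ∀ᵐ x, pmin ≤ p x) (hpmax : ∃ pmax, ∀ᵐ x, p x ≤ pmax) :
    ∃ C : ℝ≥0∞, C ≠ ∞ ∧ ∀ F : ℝ → Rn n → ℝ, Measurable (Function.uncurry F) →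
      mixedN n p (r * k) (duhamel (gKer n α) F) ≤ C * mixedN n (fun x => p x / k) r F := by
  have hk0 : 0 < k := one_pos.trans hk1
  obtain ⟨C₁, hC₁, hvar⟩ := exists_luxNorm_timeSup_duhamel_gKer_le hα hα1 hr hk0 hk
    (fun x => hp.2.1 x (mem_univ x))
    (hp.exists_lintegral_dyadicMaximal_div_rpow_le volume hk0 hpmin hpmax)
  obtain ⟨A, hA, hmax⟩ := exists_lintegral_dyadicMaximal_rpow_le (volume : Measure (Rn n)) hr
  obtain ⟨C₂, hC₂, hconst⟩ := exists_luxNorm_timeSup_duhamel_gKer_le (q := fun _ => r * k)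
    hα hα1 hr hk0 hk (fun _ => one_le_mul_of_one_le_of_one_le hr.le hk1.le) (by
      simp only [mul_div_cancel_right₀ r hk0.ne']
      exact ⟨A * 1, by finiteness, fun f hf hfr => (hmax f hf).trans (by gcongr)⟩)
  simp only [mul_div_cancel_right₀ r hk0.ne'] at hconst
  refine ⟨C₁ + C₂, by finiteness, fun F hF => ?_⟩
  refine max_le ((hvar F hF).trans ?_) ((hconst F hF).trans ?_)
  · gcongr
    exact le_self_add
  · gcongr
    · exact le_add_self
    · exact max_le (le_max_right _ _) (le_max_right _ _)

end ExternalForce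

theorem stmt7_general {n : ℕ} {α b : ℝ} (hα : 0 < α) (hα1 : α ≤ 1) (hb : 0 < b)
    (hnb : 2 * α * (b + 1) < n * b) {p : Rn n → ℝ} (hplog : IsPLog univ p)
    (hpmin : ∃ pmin, b + 1 < pmin ∧ ∀ᵐ x, pmin ≤ p x) (hpmax : ∃ pmax, ∀ᵐ x, p x ≤ pmax) :
    ∃ C > (0 : ℝ), ∀ F : ℝ → Rn n → ℝ, Measurable (Function.uncurry F) →
      mixedN n p (n * b / (2 * α)) (duhamel (gKer n α) F)
        ≤ ENNReal.ofReal C * mixedN n (fun x => p x / (b + 1)) (n * b / ((b + 1) * (2 * α))) F := by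
  have hn : 0 < (n : ℝ) := pos_of_mul_pos_left (lt_trans (by positivity) hnb) hb.le
  have : Nonempty (Fin n) := Fin.pos_iff_nonempty.1 (Nat.cast_pos.1 hn)
  set r := n * b / ((b + 1) * (2 * α)) with hr_def
  have hr : 1 < r := by rwa [one_lt_div (by positivity), mul_comm (b + 1)]
  have hk : 1 - 2 * α * r / n = 1 / (b + 1) := by
    rw [hr_def]
    field_simp
    ring
  have hrb : n * b / (2 * α) = r * (b + 1) := by
    rw [hr_def]
    field_simp
  obtain ⟨C, hC, hmixed⟩ := exists_mixedN_duhamel_gKer_le hα hα1 hr (lt_add_of_pos_left 1 hb) hk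
    hplog hpmin hpmax
  refine ⟨C.toReal + 1, by positivity, fun F hF => ?_⟩
  rw [hrb, ENNReal.ofReal_add (by positivity) zero_le_one, ENNReal.ofReal_toReal hC]
  refine (hmixed F hF).trans ?_
  gcongr
  exact le_self_add

/-- Control of the external force term (γ = 0) in mixed variable Lebesgue spaces. -/
theorem stmt7 (n b : ℕ) (hn : 1 ≤ n) (hb : 1 ≤ b) (α : ℝ) (hα : 1/2 < α ∧ α ≤ 1)
    (h2α : 2 * α < n) (hnb : 2 * α * ((b:ℝ) + 1) < (n:ℝ) * b)
    (p : Rn n → ℝ) (hplog : IsPLog univ p)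
    (hpminus : ∃ pm : ℝ, (b:ℝ) + 1 < pm ∧ ∀ᵐ x ∂(volume : Measure (Rn n)), pm ≤ p x)
    (hpplus : ∃ P : ℝ, (∀ᵐ x ∂(volume : Measure (Rn n)), p x ≤ P) ∧
      2 * α * P < (n:ℝ) * ((b:ℝ) + 1)) :
    ∃ C > (0:ℝ), ∀ F : ℝ → Rn n → ℝ, Measurable (Function.uncurry F) →
      mixedN n p ((n:ℝ) * b / (2 * α))
        (fun t x => ∫ s in Ioc (0:ℝ) t, conv n (gKer n α (t - s)) (F s) x)
      ≤ ENNReal.ofReal C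
        * mixedN n (fun x => p x / ((b:ℝ) + 1)) ((n:ℝ) * b / (((b:ℝ) + 1) * (2 * α))) F :=
  stmt7_general (one_half_pos.trans hα.1) hα.2 (Nat.cast_pos.2 hb) hnb hplog hpminus
    (hpplus.imp fun _ => And.left)
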